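/- Let n ≥ 3, 1 ≤ k ≤ n/2, A diagonal in 𝒜_k (with λ_max(A) < 1/2 when k = 1), x₀ ∈ B_{1/2}(0)∖{0}, and fix c ≥ c*. For each 0 < ε < 1/2 let u^ε be the unique k-convex solution of S_k(D²u) = 1 in ℝⁿ∖B̄_ε(x₀), u = 0 on ∂B_ε(x₀), lim_{|x|→∞}(u(x) − (½xᵀAx + c)) = 0, and let ũ^ε be its extension by 0 on B_ε(x₀). Then, as ε → 0⁺, ũ^ε converges to ψ(x) = ½xᵀAx + c in L¹_loc(ℝⁿ) and in C^{0,γ}_loc(ℝⁿ∖{x₀}) for every 0 < γ < 1. -/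

import Mathlib

open scoped Classical Topology
open Real Filter MeasureTheory

noncomputable section

/-- Euclidean space ℝⁿ. -/
abbrev Euc (n : ℕ) : Type := EuclideanSpace ℝ (Fin n)

/-- The standard basis vector `e i`. -/
def ebasis (n : ℕ) (i : Fin n) : Euc n := EuclideanSpace.single i 1

/-- The Hessian matrix `D²u(x)`. -/
def hessMat (n : ℕ) (u : Euc n → ℝ) (x : Euc n) : Matrix (Fin n) (Fin n) ℝ :=
  Matrix.of fun i j => iteratedFDeriv ℝ 2 u x ![ebasis n i, ebasis n j]

/-- The Laplacian `Δu(x)` (trace of the Hessian). -/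
def lapl (n : ℕ) (u : Euc n → ℝ) (x : Euc n) : ℝ := ∑ i, hessMat n u x i i

/-- The `k`-th elementary symmetric function of the eigenvalues of an `n × n` matrix,
expressed through the coefficients of the characteristic polynomial. -/
def matSk (n k : ℕ) (M : Matrix (Fin n) (Fin n) ℝ) : ℝ :=
  (-1 : ℝ) ^ k * (Matrix.charpoly M).coeff (n - k)

/-- `S_k(D²u)(x)`. -/
def SkHess (n k : ℕ) (u : Euc n → ℝ) (x : Euc n) : ℝ := matSk n k (hessMat n u x)

/-- `u` is `k`-convex on `U`: the eigenvalues of the Hessian lie in the Gårding cone `Γ_k`. -/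
def KConvexOn (n k : ℕ) (u : Euc n → ℝ) (U : Set (Euc n)) : Prop :=
  ∀ x ∈ U, ∀ j : ℕ, 1 ≤ j → j ≤ k → 0 < matSk n j (hessMat n u x)

/-- Membership in the class `𝒜_k`: symmetric positive definite with `S_k(λ(A)) = 1`. -/
def MemA (n k : ℕ) (A : Matrix (Fin n) (Fin n) ℝ) : Prop :=
  A.IsSymm ∧ A.PosDef ∧ matSk n k A = 1

/-- The quadratic form `½ xᵀ A x`. -/
def quadA (n : ℕ) (A : Matrix (Fin n) (Fin n) ℝ) (x : Euc n) : ℝ :=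
  (1 / 2) * ∑ i, ∑ j, x i * A i j * x j

/-- The linear form `b ⋅ x`. -/
def linB (n : ℕ) (b x : Euc n) : ℝ := ∑ i, b i * x i

/-- `λ_max(A) < c`, expressed through the quadratic form (for symmetric `A`). -/
def lambdaMaxLT (n : ℕ) (A : Matrix (Fin n) (Fin n) ℝ) (c : ℝ) : Prop :=
  ∀ x : Euc n, x ≠ 0 → ∑ i, ∑ j, x i * A i j * x j < c * ‖x‖ ^ 2

/-- `u` is smooth on an open neighbourhood of the (closed) set `S`;
this is our rendering of `u ∈ C^∞(S)` for a closed set `S`. -/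
def SmoothOnNhd (n : ℕ) (u : Euc n → ℝ) (S : Set (Euc n)) : Prop :=
  ∃ U : Set (Euc n), IsOpen U ∧ S ⊆ U ∧ ContDiffOn ℝ (⊤ : ℕ∞) u U

/-- A smooth bounded strictly convex domain in ℝⁿ. -/
def SmoothStrictConvexDomain (n : ℕ) (Ω : Set (Euc n)) : Prop :=
  IsOpen Ω ∧ Bornology.IsBounded Ω ∧ Ω.Nonempty ∧ Convex ℝ Ω ∧ StrictConvex ℝ Ω ∧
    ∃ f : Euc n → ℝ, ContDiff ℝ (⊤ : ℕ∞) f ∧ Ω = {x | f x < 0} ∧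
      ∀ x ∈ frontier Ω, fderiv ℝ f x ≠ 0

/-- Extension of `u` by the constant value `v` inside `Ω`. -/
def extBy (n : ℕ) (Ω : Set (Euc n)) (v : ℝ) (u : Euc n → ℝ) : Euc n → ℝ :=
  fun x => if x ∈ Ω then v else u x

/-- `u` (vanishing on `∂Ω`) is quasiconvex: all sublevel sets of its zero-extension are convex. -/
def QuasiconvexSol (n : ℕ) (Ω : Set (Euc n)) (u : Euc n → ℝ) : Prop :=
  ∀ t : ℝ, Convex ℝ {x : Euc n | extBy n Ω 0 u x ≤ t}

/-- The `k`-th elementary symmetric polynomial of a vector `a ∈ ℝⁿ`. -/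
def esymmVec (n k : ℕ) (a : Fin n → ℝ) : ℝ :=
  ∑ s ∈ Finset.powersetCard k (Finset.univ : Finset (Fin n)), ∏ i ∈ s, a i

/-- `h_k(a) = max_i S_{k-1}(a)|_{a_i = 0} · a_i`. -/
def hkfun (n k : ℕ) (a : Fin n → ℝ) : ℝ :=
  ⨆ i : Fin n, esymmVec n (k - 1) (Function.update a i 0) * a i

/-- The exponent `-k / (2 h_k(a))`. -/
def genExp (n k : ℕ) (a : Fin n → ℝ) : ℝ := -(k : ℝ) / (2 * hkfun n k a)

/-- The integrand `(1 + α t^{-k/(2h_k(a))})^{1/k}`. -/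
def genInt (n k : ℕ) (a : Fin n → ℝ) (α t : ℝ) : ℝ :=
  (1 + α * t ^ genExp n k a) ^ ((1 : ℝ) / (k : ℝ))

/-- The generalized symmetric function `ū`. -/
def ubar (n k : ℕ) (a : Fin n → ℝ) (R₀ α : ℝ) (x : Euc n) : ℝ :=
  ∫ t in R₀..(quadA n (Matrix.diagonal a) x), genInt n k a α t

/-- `μ(α) = ∫_{R₀}^∞ ((1 + α t^{-k/(2h_k(a))})^{1/k} - 1) dt - R₀`. -/
def muA (n k : ℕ) (a : Fin n → ℝ) (R₀ α : ℝ) : ℝ :=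
  (∫ t in Set.Ioi R₀, (genInt n k a α t - 1)) - R₀

/-- The ellipsoid `E_R(xb) = {x : ½ (x - xb)ᵀ A (x - xb) < R}`. -/
def ESet (n : ℕ) (A : Matrix (Fin n) (Fin n) ℝ) (xb : Euc n) (R : ℝ) : Set (Euc n) :=
  {x : Euc n | quadA n A (x - xb) < R}

/-- The non-concentric convex ring `Ω_R^ε = E_R(0) ∖ B̄_ε(x₀)`. -/
def OmegaRe (n : ℕ) (a : Fin n → ℝ) (x₀ : Euc n) (ε R : ℝ) : Set (Euc n) :=
  ESet n (Matrix.diagonal a) 0 R \ closure (Metric.ball x₀ ε)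

/-- `u` is a `k`-convex solution of the approximating problem
`S_k(D²u) = 1` in `Ω_R^ε`, `u = 0` on `∂B_ε(x₀)`, `u = ū` on `∂E_R(0)`. -/
def ApproxSol (n k : ℕ) (a : Fin n → ℝ) (x₀ : Euc n) (ε R R₀ α : ℝ)
    (u : Euc n → ℝ) : Prop :=
  SmoothOnNhd n u (closure (OmegaRe n a x₀ ε R)) ∧
  KConvexOn n k u (OmegaRe n a x₀ ε R) ∧
  (∀ x ∈ OmegaRe n a x₀ ε R, SkHess n k u x = 1) ∧
  (∀ x ∈ Metric.sphere x₀ ε, u x = 0) ∧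
  (∀ x : Euc n, quadA n (Matrix.diagonal a) x = R → u x = ubar n k a R₀ α x)

/-- The constant `C_ε` of the boundary gradient estimate. -/
def Ceps (n k : ℕ) (C ε : ℝ) : ℝ :=
  if 2 * k < n then C * ((n : ℝ) / (k : ℝ) - 2) * ε⁻¹
  else if 2 * k = n then C * ε⁻¹ * |Real.log ε|⁻¹
  else C * (2 - (n : ℝ) / (k : ℝ)) * ε ^ (1 - (n : ℝ) / (k : ℝ))

/-- `u` is a `k`-convex solution of the exterior Dirichlet problem
`S_k(D²u) = 1` in `ℝⁿ ∖ B̄_ε(x₀)`, `u = 0` on `∂B_ε(x₀)`, with quadratic asymptotics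
`½ xᵀAx + c` at infinity (`A = diag a`). -/
def ExtBallSol (n k : ℕ) (a : Fin n → ℝ) (x₀ : Euc n) (ε c : ℝ) (u : Euc n → ℝ) : Prop :=
  SmoothOnNhd n u (Metric.ball x₀ ε)ᶜ ∧
  KConvexOn n k u (closure (Metric.ball x₀ ε))ᶜ ∧
  (∀ x ∈ (closure (Metric.ball x₀ ε))ᶜ, SkHess n k u x = 1) ∧
  (∀ x ∈ Metric.sphere x₀ ε, u x = 0) ∧
  Tendsto (fun x : Euc n => u x - (quadA n (Matrix.diagonal a) x + c))
    (cocompact (Euc n)) (𝓝 0)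

/-- `u` is a `k`-convex solution of the exterior Dirichlet problem on `ℝⁿ ∖ Ω₀` with
asymptotics `½ xᵀAx + b·x + c` at infinity. -/
def ExtDomSol (n k : ℕ) (Ω₀ : Set (Euc n)) (A : Matrix (Fin n) (Fin n) ℝ) (b : Euc n)
    (c : ℝ) (u : Euc n → ℝ) : Prop :=
  SmoothOnNhd n u Ω₀ᶜ ∧
  KConvexOn n k u (closure Ω₀)ᶜ ∧
  (∀ x ∈ (closure Ω₀)ᶜ, SkHess n k u x = 1) ∧
  (∀ x ∈ frontier Ω₀, u x = 0) ∧
  Tendsto (fun x : Euc n => u x - (quadA n A x + linB n b x + c))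
    (cocompact (Euc n)) (𝓝 0)

/-- `u` is a solution of the exterior Dirichlet problem for the Laplace equation
`Δu = 1` on `ℝⁿ ∖ Ω₀` with asymptotics `½ xᵀAx + b·x + c` at infinity. -/
def ExtDomSolLap (n : ℕ) (Ω₀ : Set (Euc n)) (A : Matrix (Fin n) (Fin n) ℝ) (b : Euc n)
    (c : ℝ) (u : Euc n → ℝ) : Prop :=
  SmoothOnNhd n u Ω₀ᶜ ∧
  (∀ x ∈ (closure Ω₀)ᶜ, lapl n u x = 1) ∧
  (∀ x ∈ frontier Ω₀, u x = 0) ∧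
  Tendsto (fun x : Euc n => u x - (quadA n A x + linB n b x + c))
    (cocompact (Euc n)) (𝓝 0)

/-- `u` solves the exterior problem `Δu = 0` in `ℝⁿ ∖ Ω̄`, `u = 1` on `∂Ω`,
`u → 0` at infinity. -/
def HarmExtSol (n : ℕ) (Ω : Set (Euc n)) (u : Euc n → ℝ) : Prop :=
  SmoothOnNhd n u Ωᶜ ∧
  (∀ x ∈ (closure Ω)ᶜ, lapl n u x = 0) ∧
  (∀ x ∈ frontier Ω, u x = 1) ∧
  Tendsto u (cocompact (Euc n)) (𝓝 0)

end

/-!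
Write `ψ x = ½xᵀAx + c`. The maximum principle gives `u^ε ≤ ψ`. In the other direction
`ψ - M arsinh ‖x - x₀‖⁻¹` is a `k`-convex strict subsolution for `0 < M ≤ λ_min(A)`: its Hessian is
that of `ψ` plus a multiple of `I - t e ⊗ e` with `t < 3`, and `2k ≤ n` makes the contribution of
such a matrix to `S_k` positive. Choosing `M` comparable to `1 / arsinh ε⁻¹` keeps it below `u^ε`
on `∂B_ε(x₀)`, so `|u^ε - ψ| ≤ C arsinh ‖x - x₀‖⁻¹ / arsinh ε⁻¹`, which tends to `0` and stays
bounded by `C`: this is the `L¹` and the locally uniform convergence. A Bernstein-type interior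
gradient estimate bounds `u^ε - ψ` in the Lipschitz norm away from `x₀`, and interpolating between
the two gives the convergence in `C^{0,γ}`.
-/

section ElementarySymmetric

open Finset Polynomial

variable {ι R : Type*} [CommRing R]

/-- The `k`-th elementary symmetric function of the family `l` restricted to the finite index
set `s`.  Keeping `s` as an argument makes `S_{k;i}(l)`, the function with the `i`-th variable
removed, simply `esymmOn l (s.erase i) k`. -/
def esymmOn (l : ι → R) (s : Finset ι) (k : ℕ) : R :=
  ∑ t ∈ s.powersetCard k, ∏ i ∈ t, l i

theorem prod_one_add_C_mul_X (l : ι → R) (s : Finset ι) :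
    ∏ i ∈ s, (1 + C (l i) * X) = ∑ k ∈ range (#s + 1), C (esymmOn l s k) * X ^ k := by
  rw [prod_one_add, sum_powerset]
  refine sum_congr rfl fun k _ => ?_
  rw [esymmOn, map_sum, sum_mul]
  refine sum_congr rfl fun t ht => ?_
  rw [prod_mul_distrib, prod_const, (mem_powersetCard.1 ht).2, map_prod]

theorem esymmOn_eq_zero (l : ι → R) {s : Finset ι} {k : ℕ} (hk : #s < k) :
    esymmOn l s k = 0 := by
  rw [esymmOn, powersetCard_eq_empty.2 hk, sum_empty]

theorem coeff_prod_one_add_C_mul_X (l : ι → R) (s : Finset ι) (k : ℕ) :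
    (∏ i ∈ s, (1 + C (l i) * X)).coeff k = esymmOn l s k := by
  simp only [prod_one_add_C_mul_X, finsetSum_coeff, coeff_C_mul_X_pow, sum_ite_eq, mem_range]
  exact ite_eq_left_iff.2 fun hk => (esymmOn_eq_zero l (by omega)).symm

@[simp] theorem esymmOn_zero (l : ι → R) (s : Finset ι) : esymmOn l s 0 = 1 := by
  simp [esymmOn]

theorem coeff_one_add_C_mul_X_pow (t : R) (n k : ℕ) :
    ((1 + C t * X) ^ n).coeff k = n.choose k * t ^ k := by
  have h : (1 + C t * X : R[X]) ^ n = ((1 + X : R[X]) ^ n).comp (C t * X) := by simp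
  rw [h, comp_C_mul_X_coeff, coeff_one_add_X_pow]

theorem esymmOn_add_const (l : ι → R) (s : Finset ι) (t : R) (k : ℕ) :
    esymmOn (fun i => l i + t) s k =
      ∑ j ∈ range (k + 1), esymmOn l s j * ((#s - j).choose (k - j) * t ^ (k - j)) := by
  have hterm : ∀ j, (∑ τ ∈ s.powersetCard j,
        (∏ i ∈ τ, C (l i) * X) * ∏ i ∈ s \ τ, (1 + C t * X)).coeff k =
      if j ≤ k then esymmOn l s j * ((#s - j).choose (k - j) * t ^ (k - j)) else 0 := fun j => by
    have h : ∀ τ ∈ s.powersetCard j, (∏ i ∈ τ, C (l i) * X) * ∏ i ∈ s \ τ, (1 + C t * X) =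
        C (∏ i ∈ τ, l i) * (X ^ j * (1 + C t * X) ^ (#s - j)) := fun τ hτ => by
      obtain ⟨hsub, hcard⟩ := mem_powersetCard.1 hτ
      rw [prod_mul_distrib, prod_const, prod_const, card_sdiff_of_subset hsub, hcard, map_prod,
        mul_assoc]
    rw [sum_congr rfl h, ← sum_mul, ← map_sum, ← esymmOn, coeff_C_mul, coeff_X_pow_mul']
    split_ifs <;> simp [coeff_one_add_C_mul_X_pow]
  have hsplit : ∏ i ∈ s, (1 + C (l i + t) * X) = ∏ i ∈ s, (C (l i) * X + (1 + C t * X)) :=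
    prod_congr rfl fun i _ => by rw [C_add]; ring
  rw [← coeff_prod_one_add_C_mul_X, hsplit, prod_add, sum_powerset, finsetSum_coeff,
    sum_congr rfl fun j _ => hterm j, ← sum_filter]
  refine sum_subset (fun j hj => ?_) fun j hj hj' => ?_
  · simp only [mem_filter, mem_range] at hj ⊢
    omega
  · simp only [mem_filter, mem_range] at hj hj'
    rw [esymmOn_eq_zero l (by omega), zero_mul]

variable [DecidableEq ι]

theorem esymmOn_succ_eq_erase (l : ι → R) {s : Finset ι} {i : ι} (hi : i ∈ s) (k : ℕ) :
    esymmOn l s (k + 1) =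
      esymmOn l (s.erase i) (k + 1) + l i * esymmOn l (s.erase i) k := by
  simp only [← coeff_prod_one_add_C_mul_X]
  rw [← mul_prod_erase s _ hi, add_mul, one_mul, mul_assoc, coeff_add, coeff_C_mul, coeff_X_mul]

theorem sum_mul_esymmOn_erase (l : ι → R) (s : Finset ι) (k : ℕ) :
    ∑ i ∈ s, l i * esymmOn l (s.erase i) k = (k + 1) * esymmOn l s (k + 1) := by
  have h := congrArg (fun p : R[X] => p.coeff k)
    (derivative_prod_finset (s := s) (f := fun i => 1 + C (l i) * X))
  simp only [coeff_derivative, finsetSum_coeff, derivative_add, derivative_one, derivative_C_mul,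
    derivative_X, mul_one, zero_add, coeff_mul_C, coeff_prod_one_add_C_mul_X] at h
  rw [mul_comm, h]
  exact sum_congr rfl fun i _ => mul_comm _ _

theorem sum_esymmOn_erase (l : ι → R) (s : Finset ι) (k : ℕ) :
    ∑ i ∈ s, esymmOn l (s.erase i) k = (#s - k : R) * esymmOn l s k := by
  cases k with
  | zero => simp
  | succ k =>
    have h : ∀ i ∈ s, esymmOn l (s.erase i) (k + 1) =
        esymmOn l s (k + 1) - l i * esymmOn l (s.erase i) k := fun i hi => by
      rw [esymmOn_succ_eq_erase l hi, add_sub_cancel_right]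
    rw [sum_congr rfl h, sum_sub_distrib, sum_const, nsmul_eq_mul, sum_mul_esymmOn_erase]
    push_cast
    ring

theorem esymmOn_erase_sub_esymmOn_erase (l : ι → R) {s : Finset ι} {i j : ι} (hi : i ∈ s)
    (hj : j ∈ s) (hij : i ≠ j) (k : ℕ) :
    esymmOn l (s.erase i) (k + 1) - esymmOn l (s.erase j) (k + 1) =
      (l j - l i) * esymmOn l ((s.erase i).erase j) k := by
  rw [esymmOn_succ_eq_erase l (mem_erase.2 ⟨hij.symm, hj⟩),
    esymmOn_succ_eq_erase l (mem_erase.2 ⟨hij, hi⟩), erase_right_comm (a := j)]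
  ring

end ElementarySymmetric

section Newton

open Polynomial

theorem splits_derivative {p : ℝ[X]} (hp : p.Splits) : (derivative p).Splits := by
  by_cases h0 : p.natDegree = 0
  · rw [eq_C_of_natDegree_eq_zero h0]
    simp
  · rw [splits_iff_card_roots] at hp ⊢
    have h1 := card_roots_le_derivative p
    have h2 := card_roots' (derivative p)
    have h3 := natDegree_derivative_lt h0
    omega

theorem splits_iterate_derivative {p : ℝ[X]} (hp : p.Splits) (m : ℕ) :
    (derivative^[m] p).Splits := by
  induction m with
  | zero => exact hp
  | succ m ih =>
    rw [Function.iterate_succ_apply']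
    exact splits_derivative ih

theorem laguerre_inequality {K : Type*} [Field K] [LinearOrder K] [IsStrictOrderedRing K]
    {p : K[X]} (hp : p.Splits) : 2 * p.coeff 0 * p.coeff 2 ≤ p.coeff 1 ^ 2 := by
  induction hp using Submonoid.closure_induction with
  | mem x hx =>
    rcases hx with ⟨a, rfl⟩ | ⟨a, rfl⟩
    · simp
    · simp [coeff_X, coeff_C]
  | one => simp [coeff_one]
  | mul f g _ _ hf hg =>
    rw [mul_coeff_zero, mul_coeff_one, coeff_mul,
      Finset.Nat.sum_antidiagonal_eq_sum_range_succ fun i j => f.coeff i * g.coeff j,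
      Finset.sum_range_succ, Finset.sum_range_succ, Finset.sum_range_one]
    nlinarith [mul_nonneg (sq_nonneg (f.coeff 0)) (sub_nonneg.2 hg),
      mul_nonneg (sq_nonneg (g.coeff 0)) (sub_nonneg.2 hf)]

end Newton

section GardingCone

open Finset Polynomial

variable {ι : Type*} {l : ι → ℝ} {s : Finset ι} {i : ι} {k m : ℕ}

theorem esymmOn_pos (hl : ∀ i ∈ s, 0 < l i) (hk : k ≤ #s) : 0 < esymmOn l s k :=
  sum_pos (fun _ ht => prod_pos fun i hi => hl i ((mem_powersetCard.1 ht).1 hi))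
    (powersetCard_nonempty.2 hk)

theorem esymmOn_nonneg (hl : ∀ i ∈ s, 0 ≤ l i) (k : ℕ) : 0 ≤ esymmOn l s k :=
  sum_nonneg fun _ ht => prod_nonneg fun i hi => hl i ((mem_powersetCard.1 ht).1 hi)

theorem esymmOn_le_esymmOn {l' : ι → ℝ} (hl : ∀ i ∈ s, 0 ≤ l i) (hll' : ∀ i ∈ s, l i ≤ l' i)
    (k : ℕ) : esymmOn l s k ≤ esymmOn l' s k :=
  sum_le_sum fun _ ht => prod_le_prod (fun i hi => hl i ((mem_powersetCard.1 ht).1 hi))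
    fun i hi => hll' i ((mem_powersetCard.1 ht).1 hi)

/-- Newton's inequality for `E_k = esymmOn l s k`, with its constant, comes from Laguerre's
inequality for the `m`-th derivative of the real-rooted polynomial `∏ (1 + l i X)`. -/
theorem newton_inequality (l : ι → ℝ) (s : Finset ι) (m : ℕ) :
    (m + 2) * (esymmOn l s m * esymmOn l s (m + 2)) ≤ (m + 1) * esymmOn l s (m + 1) ^ 2 := by
  have hsplits : (∏ i ∈ s, (1 + C (l i) * X)).Splits := Splits.prod fun i _ =>
    Splits.of_natDegree_le_one (by compute_degree)
  have h := laguerre_inequality (splits_iterate_derivative hsplits m)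
  simp only [coeff_iterate_derivative, zero_add, nsmul_eq_mul, coeff_prod_one_add_C_mul_X,
    Nat.descFactorial_self, add_comm 1 m, add_comm 2 m] at h
  have h1 : (m + 1).descFactorial m = (m + 1) * m.factorial := by
    simpa [Nat.factorial_succ] using Nat.factorial_mul_descFactorial (m.le_add_right 1)
  have h2 : 2 * (m + 2).descFactorial m = (m + 2) * ((m + 1) * m.factorial) := by
    simpa [Nat.factorial_succ] using Nat.factorial_mul_descFactorial (m.le_add_right 2)
  have h2' : 2 * ((m + 2).descFactorial m : ℝ) = (m + 2) * ((m + 1) * m.factorial) := by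
    exact_mod_cast h2
  rw [h1] at h
  push_cast at h
  have hpos : (0 : ℝ) < m.factorial ^ 2 * (m + 1) := by positivity
  refine le_of_mul_le_mul_left ?_ hpos
  linear_combination h + (-(m.factorial : ℝ) * esymmOn l s m * esymmOn l s (m + 2)) * h2'

theorem esymmOn_mul_esymmOn_le_sq (l : ι → ℝ) (s : Finset ι) (m : ℕ) :
    esymmOn l s m * esymmOn l s (m + 2) ≤ esymmOn l s (m + 1) ^ 2 := by
  have hm : (0 : ℝ) ≤ m := m.cast_nonneg
  nlinarith [newton_inequality l s m, sq_nonneg (esymmOn l s (m + 1)), hm]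

theorem weighted_sum_mul_le_of_antivaryOn {w f g : ι → ℝ} (hfg : AntivaryOn f g s)
    (hw : ∀ i ∈ s, 0 ≤ w i) :
    (∑ i ∈ s, w i) * ∑ i ∈ s, w i * (f i * g i) ≤
      (∑ i ∈ s, w i * f i) * ∑ i ∈ s, w i * g i := by
  have hsum : ∑ i ∈ s, ∑ j ∈ s, w i * w j * ((f i - f j) * (g i - g j)) ≤ 0 :=
    sum_nonpos fun i hi => sum_nonpos fun j hj =>
      mul_nonpos_of_nonneg_of_nonpos (mul_nonneg (hw i hi) (hw j hj)) <| by
        have := hfg.sub_smul_sub_nonpos hj hi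
        simpa using this
  have hexpand : ∀ i j, w i * w j * ((f i - f j) * (g i - g j)) =
      w i * (f i * g i) * w j + w i * (w j * (f j * g j)) -
        (w i * f i * (w j * g j) + w i * g i * (w j * f j)) := fun i j => by ring
  simp only [hexpand, sum_sub_distrib, sum_add_distrib, ← sum_mul_sum] at hsum
  linarith

theorem choose_le_choose_succ {n r : ℕ} (h : 2 * r + 1 ≤ n) : n.choose r ≤ n.choose (r + 1) := by
  refine Nat.le_of_mul_le_mul_right ?_ r.succ_pos
  rw [Nat.choose_succ_right_eq]
  exact Nat.mul_le_mul_left _ (by omega)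

/-- The condition `2 * m < #s`, which for `S_{m+1}` of one variable more is `2 k ≤ n`, enters
through the monotonicity of the binomial coefficients below the middle one. -/
theorem mul_esymmOn_add_le_esymmOn_sub (hl : ∀ i ∈ s, 0 ≤ l i) {t : ℝ} (ht : 0 ≤ t)
    (hs : 2 ≤ #s) (hm : 2 * m < #s) :
    t * (esymmOn (fun i => l i + t) s m + esymmOn l s m) ≤
      esymmOn (fun i => l i + t) s (m + 1) - esymmOn l s (m + 1) := by
  have hlow : ∀ j ∈ range m, t * (esymmOn l s j * ((#s - j).choose (m - j) * t ^ (m - j))) ≤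
      esymmOn l s j * ((#s - j).choose (m + 1 - j) * t ^ (m + 1 - j)) := fun j hj => by
    have hjm := mem_range.1 hj
    have hchoose : (#s - j).choose (m - j) ≤ (#s - j).choose (m - j + 1) :=
      choose_le_choose_succ (by omega)
    rw [show m + 1 - j = m - j + 1 by omega, pow_succ]
    calc _ = esymmOn l s j * ((#s - j).choose (m - j) * (t ^ (m - j) * t)) := by ring
      _ ≤ _ := by have := esymmOn_nonneg hl j; gcongr
  have hmid : (2 : ℝ) ≤ (#s - m : ℕ) := by exact_mod_cast (by omega : 2 ≤ #s - m)
  have hmid' := mul_le_mul_of_nonneg_left hmid (mul_nonneg ht (esymmOn_nonneg hl m))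
  have hsum := sum_le_sum hlow
  rw [← mul_sum] at hsum
  rw [esymmOn_add_const l, esymmOn_add_const l, sum_range_succ, sum_range_succ, sum_range_succ]
  simp only [Nat.sub_self, Nat.choose_zero_right, pow_zero, Nat.cast_one, mul_one,
    Nat.add_sub_cancel_left, Nat.choose_one_right, pow_one]
  linarith

/-- The family `l`, restricted to `s`, lies in the Gårding cone `Γ_k`. -/
def GardingOn (l : ι → ℝ) (s : Finset ι) (k : ℕ) : Prop :=
  ∀ j ≤ k, 0 < esymmOn l s j

theorem GardingOn.mono (h : GardingOn l s k) (hm : m ≤ k) : GardingOn l s m :=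
  fun j hj => h j (hj.trans hm)

variable [DecidableEq ι]

theorem GardingOn.erase (h : GardingOn l s (k + 1)) (hi : i ∈ s) : GardingOn l (s.erase i) k := by
  intro j hj
  induction j with
  | zero => simp
  | succ m ih =>
    have hm := ih (by omega)
    by_contra! hneg
    have h1 := h (m + 1) (by omega)
    have h2 := h (m + 2) (by omega)
    rw [esymmOn_succ_eq_erase l hi] at h1 h2
    nlinarith [esymmOn_mul_esymmOn_le_sq l (s.erase i) m, mul_pos hm h2,
      mul_nonneg (neg_nonneg.2 hneg) h1.le]

theorem GardingOn.esymmOn_erase_pos (h : GardingOn l s (m + 1)) (hi : i ∈ s) :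
    0 < esymmOn l (s.erase i) m :=
  h.erase hi m le_rfl

theorem GardingOn.antivaryOn_esymmOn_erase (h : GardingOn l s (m + 1)) :
    AntivaryOn l (fun i => esymmOn l (s.erase i) m) s := by
  intro i hi j hj hlt
  cases m with
  | zero => simp at hlt
  | succ m =>
    have hij : i ≠ j := fun hij => hlt.ne (by rw [hij])
    have hpos : 0 < esymmOn l ((s.erase j).erase i) m :=
      (h.erase hj).esymmOn_erase_pos (mem_erase.2 ⟨hij, hi⟩)
    have hprod := sub_pos.2 hlt
    rw [esymmOn_erase_sub_esymmOn_erase l hj hi hij.symm, mul_pos_iff_of_pos_right hpos] at hprod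
    linarith

/-- The left side is `S_m` and the right side the derivative of `S_{m+1}` along a unit vector
with squared coordinates `w i` in an eigenbasis. -/
theorem GardingOn.esymmOn_le_sum_mul_esymmOn_erase (h : GardingOn l s (m + 1)) {w : ι → ℝ}
    (hw : ∀ i ∈ s, 0 ≤ w i) (hw1 : ∑ i ∈ s, w i = 1) (hl : ∑ i ∈ s, w i * l i ≤ 0) :
    esymmOn l s m ≤ ∑ i ∈ s, w i * esymmOn l (s.erase i) m := by
  cases m with
  | zero => simp [hw1]
  | succ m =>
    have hpos : 0 ≤ ∑ i ∈ s, w i * esymmOn l (s.erase i) m := sum_nonneg fun i hi =>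
      mul_nonneg (hw i hi) ((h.mono (Nat.le_succ _)).esymmOn_erase_pos hi).le
    have hcheb := weighted_sum_mul_le_of_antivaryOn
      (h.mono (Nat.le_succ _)).antivaryOn_esymmOn_erase hw
    have hsum : ∑ i ∈ s, w i * (l i * esymmOn l (s.erase i) m) ≤ 0 := by
      rw [hw1, one_mul] at hcheb
      exact hcheb.trans (mul_nonpos_of_nonpos_of_nonneg hl hpos)
    calc esymmOn l s (m + 1)
        ≤ ∑ i ∈ s, w i * esymmOn l s (m + 1) -
            ∑ i ∈ s, w i * (l i * esymmOn l (s.erase i) m) := by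
          rw [← sum_mul, hw1, one_mul]
          linarith
      _ = ∑ i ∈ s, w i * esymmOn l (s.erase i) (m + 1) := by
          rw [← sum_sub_distrib]
          refine sum_congr rfl fun i hi => ?_
          rw [esymmOn_succ_eq_erase l hi]
          ring

theorem esymmOn_add_mul_erase_lt (hl : ∀ i ∈ s, 0 < l i) (hi : i ∈ s) {t δ : ℝ} (ht : 0 < t)
    (hδ : δ < 1) (htδ : t * δ ≤ l i) (hs : 3 ≤ #s) (hm : 2 * (m + 1) ≤ #s) :
    esymmOn l s (m + 1) + t * (2 + δ) * esymmOn (fun i => l i + t) (s.erase i) m <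
      esymmOn (fun i => l i + t) s (m + 1) := by
  have hcard : #(s.erase i) = #s - 1 := card_erase_of_mem hi
  have hpos : ∀ j ∈ s.erase i, 0 < l j := fun j hj => hl j (mem_of_mem_erase hj)
  have hgain := mul_esymmOn_add_le_esymmOn_sub (m := m) (fun j hj => (hpos j hj).le) ht.le
    (by omega) (by omega)
  have hmono : esymmOn l (s.erase i) m ≤ esymmOn (fun i => l i + t) (s.erase i) m :=
    esymmOn_le_esymmOn (fun j hj => (hpos j hj).le) (fun j _ => by linarith) m
  have hE : 0 < esymmOn l (s.erase i) m := esymmOn_pos hpos (by omega)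
  rw [esymmOn_succ_eq_erase l hi, esymmOn_succ_eq_erase (fun i => l i + t) hi]
  nlinarith [mul_le_mul_of_nonneg_right htδ (sub_nonneg.2 hmono),
    mul_pos (mul_pos ht hE) (sub_pos.2 hδ)]

end GardingCone

section DeterminantLemma

open Matrix Polynomial

variable {ι R : Type*} [Fintype ι] [DecidableEq ι] [CommRing R]

theorem det_add_vecMulVec_of_isUnit {A : Matrix ι ι R} (hA : IsUnit A.det) (u v : ι → R) :
    (A + vecMulVec u v).det = A.det + v ⬝ᵥ A.adjugate *ᵥ u := by
  have hinv : A.adjugate = A.det • A⁻¹ := by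
    rw [inv_def, smul_smul, Ring.mul_inverse_cancel _ hA, one_smul]
  have hcross : replicateRow Unit v * A⁻¹ * replicateCol Unit u =
      of fun _ _ => v ⬝ᵥ A⁻¹ *ᵥ u := by
    ext
    rw [Matrix.mul_assoc, ← replicateCol_mulVec, replicateRow_mul_replicateCol_apply, of_apply]
  rw [vecMulVec_eq Unit, det_add_replicateCol_mul_replicateRow hA, hcross,
    det_unique (n := Unit), hinv, smul_mulVec, dotProduct_smul, Matrix.add_apply,
    one_apply_eq, of_apply, mul_add, mul_one, smul_eq_mul]

theorem map_det_add_vecMulVec {S : Type*} [CommRing S] (φ : R →+* S) (A : Matrix ι ι R)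
    (u v : ι → R) :
    φ (A + vecMulVec u v).det = (φ.mapMatrix A + vecMulVec (φ ∘ u) (φ ∘ v)).det := by
  rw [RingHom.map_det, map_add]
  congr 2
  ext; simp [vecMulVec_apply]

theorem map_dotProduct_adjugate_mulVec {S : Type*} [CommRing S] (φ : R →+* S)
    (A : Matrix ι ι R) (u v : ι → R) :
    φ (A.det + v ⬝ᵥ A.adjugate *ᵥ u) =
      (φ.mapMatrix A).det + (φ ∘ v) ⬝ᵥ (φ.mapMatrix A).adjugate *ᵥ (φ ∘ u) := by
  rw [map_add, RingHom.map_det, RingHom.map_dotProduct, ← RingHom.map_adjugate]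
  congr 2
  ext; simp [RingHom.map_mulVec]

theorem det_add_vecMulVec (A : Matrix ι ι R) (u v : ι → R) :
    (A + vecMulVec u v).det = A.det + v ⬝ᵥ A.adjugate *ᵥ u := by
  let B : Matrix ι ι R[X] := charmatrix (-A)
  let φ : R[X] →+* FractionRing R[X] := algebraMap _ _
  have hunit : IsUnit (φ.mapMatrix B).det := by
    rw [← RingHom.map_det]
    exact IsLocalization.map_units _ ⟨_, (charpoly_monic (-A)).mem_nonZeroDivisors⟩
  have hpoly : (B + vecMulVec (C ∘ u) (C ∘ v)).det =
      B.det + (C ∘ v) ⬝ᵥ B.adjugate *ᵥ (C ∘ u) := by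
    apply IsFractionRing.injective R[X] (FractionRing R[X])
    change φ _ = φ _
    rw [map_det_add_vecMulVec, map_dotProduct_adjugate_mulVec, det_add_vecMulVec_of_isUnit hunit]
  have heval : (evalRingHom 0).mapMatrix B = A := by
    ext i j
    by_cases h : i = j <;> simp [B, h]
  have hC : ∀ w : ι → R, evalRingHom 0 ∘ C ∘ w = w := fun w => by ext; simp
  have := congrArg (evalRingHom (0 : R)) hpoly
  rwa [map_det_add_vecMulVec, map_dotProduct_adjugate_mulVec, heval, hC, hC] at this

theorem det_diagonal_add_vecMulVec (d u v : ι → R) :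
    (diagonal d + vecMulVec u v).det =
      ∏ i, d i + ∑ i, u i * v i * ∏ j ∈ Finset.univ.erase i, d j := by
  rw [det_add_vecMulVec, det_diagonal, adjugate_diagonal]
  congr 1
  exact Finset.sum_congr rfl fun i _ => by rw [mulVec_diagonal]; ring

end DeterminantLemma

section MatrixSymmetricFunctions

open Matrix Polynomial

variable {n k m : ℕ} {M P U : Matrix (Fin n) (Fin n) ℝ}

theorem matSk_eq_sum_minors (hk : k ≤ n) (M : Matrix (Fin n) (Fin n) ℝ) :
    matSk n k M = ∑ s ∈ Finset.univ.powersetCard k,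
      (M.submatrix (Subtype.val : s → Fin n) Subtype.val).det := by
  have h := M.charpoly_coeff_eq_sum_minors k (by simpa using hk)
  rw [Fintype.card_fin] at h
  rw [matSk, h, ← mul_assoc, ← mul_pow]
  norm_num

theorem matSk_eq_coeff_det (hk : k ≤ n) (M : Matrix (Fin n) (Fin n) ℝ) :
    matSk n k M = (det (1 + (X : ℝ[X]) • M.map C)).coeff k :=
  (matSk_eq_sum_minors hk M).trans (coeff_det_one_add_X_smul_eq_sum_minors M k).symm

@[simp]
theorem matSk_zero (M : Matrix (Fin n) (Fin n) ℝ) : matSk n 0 M = 1 := by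
  rw [matSk_eq_sum_minors n.zero_le]
  simp

theorem matSk_smul (hk : k ≤ n) (c : ℝ) (M : Matrix (Fin n) (Fin n) ℝ) :
    matSk n k (c • M) = c ^ k * matSk n k M := by
  rw [matSk_eq_sum_minors hk, matSk_eq_sum_minors hk, Finset.mul_sum]
  refine Finset.sum_congr rfl fun s hs => ?_
  rw [submatrix_smul, Pi.smul_apply, Pi.smul_apply, det_smul, Fintype.card_coe,
    (Finset.mem_powersetCard.1 hs).2]

theorem matSk_diagonal_add_smul_vecMulVec (hk : k + 1 ≤ n) (l w : Fin n → ℝ) (s : ℝ) :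
    matSk n (k + 1) (diagonal l + s • vecMulVec w w) =
      esymmOn l Finset.univ (k + 1) +
        s * ∑ i, w i ^ 2 * esymmOn l (Finset.univ.erase i) k := by
  have hmat : 1 + (X : ℝ[X]) • (diagonal l + s • vecMulVec w w).map C =
      diagonal (fun i => 1 + C (l i) * X) + vecMulVec (fun i => C (s * w i) * X) (C ∘ w) := by
    ext1 i j
    obtain rfl | hij := eq_or_ne i j
    · simp [vecMulVec_apply]; ring
    · simp [vecMulVec_apply, hij]; ring
  have hterm : ∀ i, C (s * w i) * X * (C ∘ w) i * ∏ j ∈ Finset.univ.erase i, (1 + C (l j) * X) =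
      C (s * w i ^ 2) * ((∏ j ∈ Finset.univ.erase i, (1 + C (l j) * X)) * X) := fun i => by
    simp only [C_mul, C_pow, Function.comp_apply]; ring
  simp only [matSk_eq_coeff_det hk, hmat, det_diagonal_add_vecMulVec, hterm, coeff_add,
    coeff_prod_one_add_C_mul_X, finsetSum_coeff, coeff_C_mul, coeff_mul_X]
  simp only [Finset.mul_sum, mul_assoc]

theorem matSk_diagonal (hk : k ≤ n) (l : Fin n → ℝ) :
    matSk n k (diagonal l) = esymmOn l Finset.univ k := by
  obtain _ | k := k
  · simp
  · simpa using matSk_diagonal_add_smul_vecMulVec hk l 0 0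

theorem matSk_conj (hU : U ∈ orthogonalGroup (Fin n) ℝ) (k : ℕ) (M : Matrix (Fin n) (Fin n) ℝ) :
    matSk n k (U * M * Uᵀ) = matSk n k M := by
  rw [matSk, charpoly_mul_comm, ← Matrix.mul_assoc, (mem_orthogonalGroup_iff' _ _).1 hU,
    Matrix.one_mul, matSk]

theorem conj_vecMulVec_transpose_mulVec (hU : U ∈ orthogonalGroup (Fin n) ℝ) (v : Fin n → ℝ) :
    U * vecMulVec (Uᵀ *ᵥ v) (Uᵀ *ᵥ v) * Uᵀ = vecMulVec v v := by
  have hUU : U * Uᵀ = 1 := (mem_orthogonalGroup_iff _ _).1 hU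
  have hUv : U *ᵥ Uᵀ *ᵥ v = v := by rw [mulVec_mulVec, hUU, one_mulVec]
  rw [mul_vecMulVec, vecMulVec_mul, vecMul_transpose, hUv]

theorem matSk_conj_diagonal_add_smul_vecMulVec (hk : k + 1 ≤ n)
    (hU : U ∈ orthogonalGroup (Fin n) ℝ) (l v : Fin n → ℝ) (s : ℝ) :
    matSk n (k + 1) (U * diagonal l * Uᵀ + s • vecMulVec v v) =
      esymmOn l Finset.univ (k + 1) +
        s * ∑ i, (Uᵀ *ᵥ v) i ^ 2 * esymmOn l (Finset.univ.erase i) k := by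
  rw [← matSk_diagonal_add_smul_vecMulVec hk, ← matSk_conj hU _ (diagonal l + _), mul_add, add_mul,
    Matrix.mul_smul, Matrix.smul_mul, conj_vecMulVec_transpose_mulVec hU]

theorem dotProduct_conj_diagonal_mulVec (U : Matrix (Fin n) (Fin n) ℝ) (l v : Fin n → ℝ) :
    v ⬝ᵥ (U * diagonal l * Uᵀ) *ᵥ v = ∑ i, (Uᵀ *ᵥ v) i ^ 2 * l i := by
  rw [← mulVec_mulVec, ← mulVec_mulVec, dotProduct_mulVec, ← mulVec_transpose]
  simp only [dotProduct, mulVec_diagonal]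
  exact Finset.sum_congr rfl fun i _ => by ring

theorem isSymm_exists_eq_conj_diagonal (hM : M.IsSymm) :
    ∃ U ∈ orthogonalGroup (Fin n) ℝ, ∃ l : Fin n → ℝ, M = U * diagonal l * Uᵀ := by
  have hH : M.IsHermitian := by
    rwa [IsHermitian, conjTranspose_eq_transpose_of_trivial]
  exact ⟨hH.eigenvectorUnitary, hH.eigenvectorUnitary.2, hH.eigenvalues, hH.spectral_theorem⟩

/-- The matrix Gårding cone: symmetric matrices whose eigenvalues lie in `Γ_k`. -/
def GardingMatrix (n k : ℕ) (M : Matrix (Fin n) (Fin n) ℝ) : Prop :=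
  M.IsSymm ∧ ∀ j ≤ k, 0 < matSk n j M

theorem GardingMatrix.exists_eq_conj_diagonal (h : GardingMatrix n k M) (hk : k ≤ n) :
    ∃ U ∈ orthogonalGroup (Fin n) ℝ, ∃ l : Fin n → ℝ,
      GardingOn l Finset.univ k ∧ M = U * diagonal l * Uᵀ := by
  obtain ⟨U, hU, l, rfl⟩ := isSymm_exists_eq_conj_diagonal h.1
  refine ⟨U, hU, l, fun j hj => ?_, rfl⟩
  rw [← matSk_diagonal (hj.trans hk), ← matSk_conj hU]
  exact h.2 j hj

theorem GardingMatrix.matSk_le_add_vecMulVec (h : GardingMatrix n k M) (hk : k ≤ n) {j : ℕ}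
    (hj : j ≤ k) (v : Fin n → ℝ) : matSk n j M ≤ matSk n j (M + vecMulVec v v) := by
  obtain ⟨U, hU, l, hl, rfl⟩ := h.exists_eq_conj_diagonal hk
  obtain _ | j := j
  · simp
  have := matSk_conj_diagonal_add_smul_vecMulVec (hj.trans hk) hU l v 1
  rw [one_smul] at this
  rw [this, matSk_conj hU, matSk_diagonal (hj.trans hk), one_mul, le_add_iff_nonneg_right]
  exact Finset.sum_nonneg fun i hi =>
    mul_nonneg (sq_nonneg _) ((hl.mono hj).esymmOn_erase_pos hi).le

theorem GardingMatrix.matSk_le_add (h : GardingMatrix n k M) (hk : k ≤ n) (hP : P.PosSemidef)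
    {j : ℕ} (hj : j ≤ k) : matSk n j M ≤ matSk n j (M + P) := by
  obtain ⟨r, v, rfl⟩ := posSemidef_iff_eq_sum_vecMulVec.1 hP
  suffices ∀ t : Finset (Fin r), GardingMatrix n k (M + ∑ i ∈ t, vecMulVec (v i) (v i)) ∧
      ∀ j ≤ k, matSk n j M ≤ matSk n j (M + ∑ i ∈ t, vecMulVec (v i) (v i)) from
    (this Finset.univ).2 j hj
  intro t
  induction t using Finset.induction_on with
  | empty => simpa using h
  | insert i t hi ih =>
    rw [Finset.sum_insert hi, add_comm (vecMulVec _ _), ← add_assoc]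
    have hle := fun j hj => (ih.2 j hj).trans (ih.1.matSk_le_add_vecMulVec hk hj (v i))
    exact ⟨⟨ih.1.1.add (transpose_vecMulVec _ _), fun j hj => (h.2 j hj).trans_le (hle j hj)⟩,
      hle⟩

theorem matSk_diagonal_lt_matSk_diagonal_add {a y : Fin n → ℝ} {t δ : ℝ} (hn : 3 ≤ n)
    (hm : 2 * (m + 1) ≤ n) (ha : ∀ i, 0 < a i) (ht : 0 < t) (hδ : δ < 1)
    (htδ : ∀ i, t * δ ≤ a i) (hy : 0 < y ⬝ᵥ y) :
    matSk n (m + 1) (diagonal a) <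
      matSk n (m + 1) (diagonal (fun i => a i + t) +
        (-(t * (2 + δ) / y ⬝ᵥ y)) • vecMulVec y y) := by
  set S := esymmOn (fun i => a i + t) Finset.univ (m + 1) - esymmOn a Finset.univ (m + 1)
  set Q := fun i => esymmOn (fun i => a i + t) (Finset.univ.erase i) m
  have hQ : ∀ i, t * (2 + δ) * Q i < S := fun i => by
    have := esymmOn_add_mul_erase_lt (fun i _ => ha i) (Finset.mem_univ i) ht hδ (htδ i)
      (by simpa using hn) (by simpa using hm)
    simp only [S, Q]; linarith
  obtain ⟨i₀, hi₀⟩ : ∃ i, y i ≠ 0 := by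
    by_contra! h
    simp [dotProduct, h] at hy
  have hsum : ∑ i, y i ^ 2 * (t * (2 + δ) * Q i) < ∑ i, y i ^ 2 * S :=
    Finset.sum_lt_sum (fun i _ => mul_le_mul_of_nonneg_left (hQ i).le (sq_nonneg _))
      ⟨i₀, Finset.mem_univ _, mul_lt_mul_of_pos_left (hQ i₀) (by positivity)⟩
  have hyy : ∑ i, y i ^ 2 = y ⬝ᵥ y := by simp [dotProduct, sq]
  have hlt : t * (2 + δ) / y ⬝ᵥ y * ∑ i, y i ^ 2 * Q i < S := by
    rw [div_mul_eq_mul_div, div_lt_iff₀ hy, ← hyy, mul_comm S, Finset.sum_mul, Finset.mul_sum]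
    simpa only [mul_left_comm] using hsum
  rw [matSk_diagonal_add_smul_vecMulVec (by omega), matSk_diagonal (by omega)]
  simp only [S, Q] at hlt ⊢
  linarith

end MatrixSymmetricFunctions

section MatrixSymmetricFunctionsDerivative

open Matrix

attribute [local instance] Matrix.normedAddCommGroup Matrix.normedSpace

variable {n k m : ℕ} {M P U : Matrix (Fin n) (Fin n) ℝ}

theorem differentiable_matSk (hk : k ≤ n) : Differentiable ℝ (matSk n k) := by
  have hentry : ∀ i j, Differentiable ℝ fun M : Matrix (Fin n) (Fin n) ℝ => M i j := fun i j =>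
    ((LinearMap.toContinuousLinearMap (entryLinearMap ℝ ℝ i j))).differentiable
  simp only [funext (matSk_eq_sum_minors hk), det_apply, submatrix_apply]
  fun_prop

theorem hasDerivAt_matSk_add_smul (hk : k ≤ n) (M P : Matrix (Fin n) (Fin n) ℝ) :
    HasDerivAt (fun s : ℝ => matSk n k (M + s • P)) (fderiv ℝ (matSk n k) M P) 0 := by
  have hline := ((hasDerivAt_id (0 : ℝ)).smul_const P).const_add M
  rw [one_smul] at hline
  have hM : HasFDerivAt (matSk n k) (fderiv ℝ (matSk n k) M) (M + (0 : ℝ) • P) := by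
    simpa using (differentiable_matSk hk M).hasFDerivAt
  exact hM.comp_hasDerivAt 0 hline

/-- Euler's identity for the homogeneous polynomial `S_k`. -/
theorem fderiv_matSk_self (hk : k ≤ n) (M : Matrix (Fin n) (Fin n) ℝ) :
    fderiv ℝ (matSk n k) M M = k * matSk n k M := by
  have hline : ∀ s : ℝ, matSk n k (M + s • M) = (1 + s) ^ k * matSk n k M := fun s => by
    rw [← matSk_smul hk, add_smul, one_smul]
  refine (hasDerivAt_matSk_add_smul hk M M).unique ?_
  simpa [hline] using (((hasDerivAt_id (0 : ℝ)).const_add 1).fun_pow k).mul_const (matSk n k M)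

theorem fderiv_matSk_vecMulVec (hm : m + 1 ≤ n) (hU : U ∈ orthogonalGroup (Fin n) ℝ)
    (l v : Fin n → ℝ) :
    fderiv ℝ (matSk n (m + 1)) (U * diagonal l * Uᵀ) (vecMulVec v v) =
      ∑ i, (Uᵀ *ᵥ v) i ^ 2 * esymmOn l (Finset.univ.erase i) m := by
  refine (hasDerivAt_matSk_add_smul hm _ _).unique ?_
  simp only [matSk_conj_diagonal_add_smul_vecMulVec hm hU]
  simpa using ((hasDerivAt_id (0 : ℝ)).mul_const _).const_add (esymmOn l Finset.univ (m + 1))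

theorem fderiv_matSk_one (hm : m + 1 ≤ n) (hM : M.IsSymm) :
    fderiv ℝ (matSk n (m + 1)) M 1 = (n - m) * matSk n m M := by
  obtain ⟨U, hU, l, rfl⟩ := isSymm_exists_eq_conj_diagonal hM
  have hone : (1 : Matrix (Fin n) (Fin n) ℝ) =
      ∑ j, vecMulVec (Pi.single j 1) (Pi.single j 1) := by
    ext p q
    simp [Matrix.sum_apply, vecMulVec_apply, one_apply, Pi.single_apply]
  have hrow : ∀ i, ∑ j, (Uᵀ *ᵥ Pi.single j 1) i ^ 2 = 1 := fun i => by
    have hUU : Uᵀ * U = 1 := (mem_orthogonalGroup_iff' _ _).1 hU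
    simpa [mul_apply, sq] using congrFun (congrFun hUU i) i
  rw [matSk_conj hU, matSk_diagonal (by omega), hone, map_sum]
  simp only [fderiv_matSk_vecMulVec hm hU]
  rw [Finset.sum_comm]
  simp only [← Finset.sum_mul, hrow, one_mul]
  simpa using sum_esymmOn_erase l Finset.univ m

theorem GardingMatrix.fderiv_matSk_nonneg (h : GardingMatrix n (m + 1) M) (hm : m + 1 ≤ n)
    (hP : P.PosSemidef) : 0 ≤ fderiv ℝ (matSk n (m + 1)) M P := by
  obtain ⟨U, hU, l, hl, rfl⟩ := h.exists_eq_conj_diagonal hm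
  obtain ⟨r, v, rfl⟩ := posSemidef_iff_eq_sum_vecMulVec.1 hP
  simp only [star_trivial, map_sum, fderiv_matSk_vecMulVec hm hU]
  exact Finset.sum_nonneg fun _ _ => Finset.sum_nonneg fun i hi =>
    mul_nonneg (sq_nonneg _) (hl.esymmOn_erase_pos hi).le

theorem GardingMatrix.matSk_le_fderiv_vecMulVec (h : GardingMatrix n (m + 1) M) (hm : m + 1 ≤ n)
    {e : Fin n → ℝ} (he : e ⬝ᵥ e = 1) (heM : e ⬝ᵥ M *ᵥ e ≤ 0) :
    matSk n m M ≤ fderiv ℝ (matSk n (m + 1)) M (vecMulVec e e) := by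
  obtain ⟨U, hU, l, hl, rfl⟩ := h.exists_eq_conj_diagonal hm
  have hUU : U * Uᵀ = 1 := (mem_orthogonalGroup_iff _ _).1 hU
  have hunit : ∑ i, (Uᵀ *ᵥ e) i ^ 2 = 1 := by
    have := dotProduct_conj_diagonal_mulVec U (fun _ => 1) e
    rw [diagonal_one, Matrix.mul_one, hUU, one_mulVec, he] at this
    simpa using this.symm
  rw [dotProduct_conj_diagonal_mulVec] at heM
  rw [matSk_conj hU, matSk_diagonal (by omega), fderiv_matSk_vecMulVec hm hU]
  exact hl.esymmOn_le_sum_mul_esymmOn_erase (fun i _ => sq_nonneg _) hunit heM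

/-- A variation `Y` of `M` that keeps `S_{m+1}` constant cannot be much more concave in a
direction `e` of nonpositive curvature than it is convex in the others. -/
theorem GardingMatrix.le_mul_of_fderiv_matSk_eq_zero (h : GardingMatrix n (m + 1) M)
    (hm : m + 1 ≤ n) {e : Fin n → ℝ} (he : e ⬝ᵥ e = 1) (heM : e ⬝ᵥ M *ᵥ e ≤ 0)
    {Y : Matrix (Fin n) (Fin n) ℝ} (hY : fderiv ℝ (matSk n (m + 1)) M Y = 0) {θ α β : ℝ}
    (hθ : θ ≤ 0) (hα : 0 ≤ α) (hβ : 0 ≤ β)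
    (hpsd : (θ • M - α • vecMulVec e e + β • (1 : Matrix (Fin n) (Fin n) ℝ) - Y).PosSemidef) :
    α ≤ n * β := by
  have hS : 0 < matSk n m M := h.2 m (Nat.le_succ m)
  have hSucc : 0 < matSk n (m + 1) M := h.2 _ le_rfl
  have htest := h.fderiv_matSk_nonneg hm hpsd
  rw [map_sub, map_add, map_sub, map_smul, map_smul, map_smul, hY, fderiv_matSk_self hm,
    fderiv_matSk_one hm h.1, smul_eq_mul, smul_eq_mul, smul_eq_mul] at htest
  have hdir := mul_le_mul_of_nonneg_left (h.matSk_le_fderiv_vecMulVec hm he heM) hα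
  have hrad : θ * ((m + 1 : ℕ) * matSk n (m + 1) M) ≤ 0 :=
    mul_nonpos_of_nonpos_of_nonneg hθ (by positivity)
  have htrace : β * ((n - m) * matSk n m M) ≤ β * (n * matSk n m M) := by
    gcongr
    linarith [m.cast_nonneg (α := ℝ)]
  refine le_of_mul_le_mul_right ?_ hS
  linarith

end MatrixSymmetricFunctionsDerivative

section SecondDerivative

variable {E : Type*} [NormedAddCommGroup E] [NormedSpace ℝ E] {f g : E → ℝ} {x : E}

theorem hasDerivAt_apply_add_smul {F : Type*} [NormedAddCommGroup F] [NormedSpace ℝ F]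
    {h : E → F} {v : E} {t : ℝ} (hh : DifferentiableAt ℝ h (x + t • v)) :
    HasDerivAt (fun s : ℝ => h (x + s • v)) (fderiv ℝ h (x + t • v) v) t := by
  have hline : HasDerivAt (fun s : ℝ => x + s • v) v t := by
    simpa using ((hasDerivAt_id t).smul_const v).const_add x
  exact hh.hasFDerivAt.comp_hasDerivAt t hline

theorem tendsto_add_smul_nhds_zero (x v : E) :
    Tendsto (fun s : ℝ => x + s • v) (𝓝 0) (𝓝 x) := by
  have hcont : Continuous fun s : ℝ => x + s • v := by fun_prop
  simpa using hcont.tendsto 0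

theorem eventually_differentiableAt_of_contDiffAt (hf : ContDiffAt ℝ 2 f x) :
    ∀ᶠ y in 𝓝 x, DifferentiableAt ℝ f y := by
  filter_upwards [hf.eventually (by simp)] with y hy using hy.differentiableAt (by simp)

theorem differentiableAt_fderiv_of_contDiffAt (hf : ContDiffAt ℝ 2 f x) :
    DifferentiableAt ℝ (fderiv ℝ f) x :=
  (hf.fderiv_right (m := 1) (by norm_num)).differentiableAt (by simp)

theorem contDiffAt_fderiv_apply (hf : ContDiffAt ℝ 3 f x) (w : E) :
    ContDiffAt ℝ 2 (fun y => fderiv ℝ f y w) x :=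
  (hf.fderiv_right (by norm_num)).clm_apply contDiffAt_const

theorem fderiv_fderiv_apply (hf : ContDiffAt ℝ 2 f x) (v w : E) :
    fderiv ℝ (fderiv ℝ f) x v w = fderiv ℝ (fun y => fderiv ℝ f y w) x v := by
  rw [fderiv_clm_apply (differentiableAt_fderiv_of_contDiffAt hf) (differentiableAt_const w)]
  simp

theorem fderiv_fderiv_comm (hf : ContDiffAt ℝ 2 f x) (v w : E) :
    fderiv ℝ (fderiv ℝ f) x v w = fderiv ℝ (fderiv ℝ f) x w v :=
  (hf.isSymmSndFDerivAt (by simp)).eq v w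

theorem fderiv_fderiv_apply_eq_of_eventually {D : E → E →L[ℝ] ℝ} {L : E →L[ℝ] ℝ} {w : E}
    (hf : ContDiffAt ℝ 2 f x) (hD : ∀ᶠ y in 𝓝 x, HasFDerivAt f (D y) y)
    (hL : HasFDerivAt (fun y => D y w) L x) (v : E) :
    fderiv ℝ (fderiv ℝ f) x v w = L v := by
  have heq : (fun y => fderiv ℝ f y w) =ᶠ[𝓝 x] fun y => D y w := by
    filter_upwards [hD] with y hy
    rw [hy.fderiv]
  rw [fderiv_fderiv_apply hf, heq.fderiv_eq, hL.fderiv]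

theorem fderiv_fderiv_add_apply (hf : ContDiffAt ℝ 2 f x) (hg : ContDiffAt ℝ 2 g x) (v w : E) :
    fderiv ℝ (fderiv ℝ fun y => f y + g y) x v w =
      fderiv ℝ (fderiv ℝ f) x v w + fderiv ℝ (fderiv ℝ g) x v w := by
  have heq : (fderiv ℝ fun y => f y + g y) =ᶠ[𝓝 x] fun y => fderiv ℝ f y + fderiv ℝ g y := by
    filter_upwards [eventually_differentiableAt_of_contDiffAt hf,
      eventually_differentiableAt_of_contDiffAt hg] with y hfy hgy using fderiv_fun_add hfy hgy
  rw [heq.fderiv_eq, fderiv_fun_add (differentiableAt_fderiv_of_contDiffAt hf)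
    (differentiableAt_fderiv_of_contDiffAt hg), _root_.add_apply, _root_.add_apply]

theorem fderiv_fderiv_mul_apply (hf : ContDiffAt ℝ 2 f x) (hg : ContDiffAt ℝ 2 g x) (v w : E) :
    fderiv ℝ (fderiv ℝ fun y => f y * g y) x v w =
      f x * fderiv ℝ (fderiv ℝ g) x v w + fderiv ℝ f x v * fderiv ℝ g x w +
        (g x * fderiv ℝ (fderiv ℝ f) x v w + fderiv ℝ g x v * fderiv ℝ f x w) := by
  have hD : ∀ᶠ y in 𝓝 x, HasFDerivAt (fun y => f y * g y)
      (f y • fderiv ℝ g y + g y • fderiv ℝ f y) y := by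
    filter_upwards [eventually_differentiableAt_of_contDiffAt hf,
      eventually_differentiableAt_of_contDiffAt hg] with y hfy hgy
    exact hfy.hasFDerivAt.mul hgy.hasFDerivAt
  have happly {h : E → ℝ} (hh : ContDiffAt ℝ 2 h x) : HasFDerivAt (fun y => fderiv ℝ h y w)
      (fderiv ℝ (fun y => fderiv ℝ h y w) x) x :=
    ((differentiableAt_fderiv_of_contDiffAt hh).clm_apply
      (differentiableAt_const w)).hasFDerivAt
  have hL := ((hf.differentiableAt (by simp)).hasFDerivAt.mul (happly hg)).add
    ((hg.differentiableAt (by simp)).hasFDerivAt.mul (happly hf))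
  rw [fderiv_fderiv_apply_eq_of_eventually (hf.mul hg) hD hL, fderiv_fderiv_apply hf,
    fderiv_fderiv_apply hg]
  simp only [_root_.add_apply, _root_.smul_apply, smul_eq_mul]
  ring

theorem fderiv_fderiv_comp_apply {φ φ' : ℝ → ℝ} {φ'' : ℝ} (hf : ContDiffAt ℝ 2 f x)
    (hφ : ContDiffAt ℝ 2 φ (f x)) (hφ' : ∀ᶠ r in 𝓝 (f x), HasDerivAt φ (φ' r) r)
    (hφ'' : HasDerivAt φ' φ'' (f x)) (v w : E) :
    fderiv ℝ (fderiv ℝ fun y => φ (f y)) x v w =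
      φ' (f x) * fderiv ℝ (fderiv ℝ f) x v w + φ'' * (fderiv ℝ f x v * fderiv ℝ f x w) := by
  have hD : ∀ᶠ y in 𝓝 x, HasFDerivAt (fun y => φ (f y)) (φ' (f y) • fderiv ℝ f y) y := by
    filter_upwards [eventually_differentiableAt_of_contDiffAt hf,
      hf.continuousAt.eventually hφ'] with y hfy hφy
    exact hφy.comp_hasFDerivAt y hfy.hasFDerivAt
  have hL := (hφ''.comp_hasFDerivAt x (hf.differentiableAt (by simp)).hasFDerivAt).mul
    ((differentiableAt_fderiv_of_contDiffAt hf).clm_apply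
      (differentiableAt_const w)).hasFDerivAt
  rw [fderiv_fderiv_apply_eq_of_eventually (f := fun y => φ (f y)) (hφ.comp x hf) hD hL,
    fderiv_fderiv_apply hf]
  simp only [_root_.add_apply, _root_.smul_apply, smul_eq_mul, Function.comp_apply]
  ring

theorem fderiv_fderiv_fderiv_apply (hf : ContDiffAt ℝ 3 f x) (u v w : E) :
    fderiv ℝ (fderiv ℝ fun y => fderiv ℝ f y w) x u v =
      fderiv ℝ (fun y => fderiv ℝ (fderiv ℝ f) y u v) x w := by
  have hf2 : ∀ᶠ y in 𝓝 x, ContDiffAt ℝ 2 f y := by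
    filter_upwards [hf.eventually (by simp)] with y hy using hy.of_le (by norm_num)
  have hswap : (fun y => fderiv ℝ (fun z => fderiv ℝ f z w) y v) =ᶠ[𝓝 x]
      fun y => fderiv ℝ (fun z => fderiv ℝ f z v) y w := by
    filter_upwards [hf2] with y hy
    rw [← fderiv_fderiv_apply hy, fderiv_fderiv_comm hy, fderiv_fderiv_apply hy]
  have hmixed : (fun y => fderiv ℝ (fderiv ℝ f) y u v) =ᶠ[𝓝 x]
      fun y => fderiv ℝ (fun z => fderiv ℝ f z v) y u := by
    filter_upwards [hf2] with y hy using fderiv_fderiv_apply hy u v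
  have hv := contDiffAt_fderiv_apply hf v
  rw [fderiv_fderiv_apply (contDiffAt_fderiv_apply hf w), hswap.fderiv_eq,
    ← fderiv_fderiv_apply hv, fderiv_fderiv_comm hv, fderiv_fderiv_apply hv, hmixed.fderiv_eq]

theorem nonpos_of_isLocalMax_of_hasDerivAt {φ φ' : ℝ → ℝ} {φ'' t : ℝ}
    (hφ : ∀ᶠ s in 𝓝 t, HasDerivAt φ (φ' s) s) (hφ' : HasDerivAt φ' φ'' t)
    (hmax : IsLocalMax φ t) : φ'' ≤ 0 := by
  have hderiv : deriv φ =ᶠ[𝓝 t] φ' := by filter_upwards [hφ] with s hs using hs.deriv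
  have hderiv2 : deriv (deriv φ) t = φ'' := by rw [hderiv.deriv_eq, hφ'.deriv]
  by_contra! hpos
  have hmin : IsLocalMin φ t :=
    isLocalMin_of_deriv_deriv_pos (hderiv2.symm ▸ hpos) hmax.deriv_eq_zero
      hφ.self_of_nhds.continuousAt
  have hconst : φ =ᶠ[𝓝 t] fun _ => φ t := by
    filter_upwards [hmax, hmin] with s hs hs' using le_antisymm hs hs'
  have hzero : deriv φ =ᶠ[𝓝 t] fun _ => 0 := by simpa using hconst.deriv
  have : deriv (deriv φ) t = 0 := by simp [hzero.deriv_eq]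
  linarith

theorem fderiv_fderiv_nonpos_of_isLocalMax (hf : ContDiffAt ℝ 2 f x) (hmax : IsLocalMax f x)
    (v : E) : fderiv ℝ (fderiv ℝ f) x v v ≤ 0 := by
  have hline := tendsto_add_smul_nhds_zero x v
  have hφ : ∀ᶠ s : ℝ in 𝓝 0,
      HasDerivAt (fun s : ℝ => f (x + s • v)) (fderiv ℝ f (x + s • v) v) s := by
    filter_upwards [hline.eventually (eventually_differentiableAt_of_contDiffAt hf)] with s hs
      using hasDerivAt_apply_add_smul hs
  have hφ' : HasDerivAt (fun s : ℝ => fderiv ℝ f (x + s • v) v)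
      (fderiv ℝ (fderiv ℝ f) x v v) 0 := by
    rw [fderiv_fderiv_apply hf]
    have hdiff := (differentiableAt_fderiv_of_contDiffAt hf).clm_apply (differentiableAt_const v)
    simpa using hasDerivAt_apply_add_smul (x := x) (v := v) (t := 0) (by simpa using hdiff)
  refine nonpos_of_isLocalMax_of_hasDerivAt hφ hφ' ?_
  have hcont : ContinuousAt (fun s : ℝ => x + s • v) 0 := by fun_prop
  exact IsLocalMax.comp_continuous (f := f) (by simpa using hmax) hcont

end SecondDerivative

section SecondDerivativeNormSq

variable {E : Type*} [NormedAddCommGroup E] [InnerProductSpace ℝ E] (z x : E)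

theorem hasFDerivAt_norm_sub_sq :
    HasFDerivAt (fun y => ‖y - z‖ ^ 2) (2 • innerSL ℝ (x - z)) x := by
  simpa using ((hasFDerivAt_id x).sub_const z).norm_sq

theorem contDiff_norm_sub_sq : ContDiff ℝ 2 fun y => ‖y - z‖ ^ 2 :=
  (contDiff_id.sub contDiff_const).norm_sq ℝ

theorem fderiv_norm_sub_sq_apply (v : E) :
    fderiv ℝ (fun y => ‖y - z‖ ^ 2) x v = 2 * inner ℝ (x - z) v := by
  simp [(hasFDerivAt_norm_sub_sq z x).fderiv, inner_sub_left]

theorem fderiv_fderiv_norm_sub_sq_apply (v w : E) :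
    fderiv ℝ (fderiv ℝ fun y => ‖y - z‖ ^ 2) x v w = 2 * inner ℝ v w := by
  have hL : HasFDerivAt (fun y => (2 • innerSL ℝ (y - z)) w) (2 • innerSL ℝ w) x := by
    have := ((innerSL ℝ w).hasFDerivAt.comp x ((hasFDerivAt_id x).sub_const z)).const_smul (2 : ℕ)
    refine (this.congr_of_eventuallyEq (.of_forall fun y => ?_)).congr_fderiv (by ext; simp)
    simp [real_inner_comm, inner_sub_right]
  rw [fderiv_fderiv_apply_eq_of_eventually (contDiff_norm_sub_sq z).contDiffAt
    (.of_forall (hasFDerivAt_norm_sub_sq z)) hL]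
  simp [real_inner_comm]

end SecondDerivativeNormSq

section HessianMatrix

open Matrix

variable {n k : ℕ} {u p : Euc n → ℝ} {x : Euc n}

theorem hessMat_apply (u : Euc n → ℝ) (x : Euc n) (i j : Fin n) :
    hessMat n u x i j = fderiv ℝ (fderiv ℝ u) x (ebasis n i) (ebasis n j) := by
  simp [hessMat, iteratedFDeriv_two_apply]

theorem sum_smul_ebasis (v : Euc n) : ∑ i, v i • ebasis n i = v := by
  ext j
  simp [ebasis, Pi.single_apply]

theorem dotProduct_hessMat_mulVec (u : Euc n → ℝ) (x v : Euc n) :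
    v.ofLp ⬝ᵥ hessMat n u x *ᵥ v.ofLp = fderiv ℝ (fderiv ℝ u) x v v := by
  conv_rhs => rw [← sum_smul_ebasis v]
  simp only [map_sum, map_smul, _root_.sum_apply, _root_.smul_apply, dotProduct, mulVec,
    smul_eq_mul, hessMat_apply, Finset.mul_sum]
  rw [Finset.sum_comm]
  exact Finset.sum_congr rfl fun i _ => Finset.sum_congr rfl fun j _ => by ring

theorem dotProduct_ofLp (v w : Euc n) : v.ofLp ⬝ᵥ w.ofLp = inner ℝ v w := by
  simp [PiLp.inner_apply, dotProduct, mul_comm]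

theorem isSymm_hessMat (hu : ContDiffAt ℝ 2 u x) : (hessMat n u x).IsSymm := by
  ext i j
  rw [transpose_apply, hessMat_apply, hessMat_apply, fderiv_fderiv_comm hu]

theorem hessMat_add (hu : ContDiffAt ℝ 2 u x) (hp : ContDiffAt ℝ 2 p x) :
    hessMat n (fun y => u y + p y) x = hessMat n u x + hessMat n p x := by
  ext i j
  simp [hessMat, fun_iteratedFDeriv_add_apply hu hp]

theorem hessMat_sub (hu : ContDiffAt ℝ 2 u x) (hp : ContDiffAt ℝ 2 p x) :
    hessMat n (fun y => u y - p y) x = hessMat n u x - hessMat n p x := by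
  ext i j
  simp [hessMat, fun_iteratedFDeriv_sub_apply hu hp]

theorem hessMat_const (c : ℝ) : hessMat n (fun _ => c) x = 0 := by
  ext i j
  simp [hessMat_apply]

theorem hessMat_const_mul (c : ℝ) (hu : ContDiffAt ℝ 2 u x) :
    hessMat n (fun y => c * u y) x = c • hessMat n u x := by
  ext i j
  simpa [hessMat] using
    congr($(iteratedFDeriv_const_smul_apply' (a := c) hu) ![ebasis n i, ebasis n j])

theorem posSemidef_hessMat_sub_of_isLocalMax (hu : ContDiffAt ℝ 2 u x)
    (hp : ContDiffAt ℝ 2 p x) (hmax : IsLocalMax (fun y => u y - p y) x) :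
    (hessMat n p x - hessMat n u x).PosSemidef := by
  refine .of_dotProduct_mulVec_nonneg ?_ fun v => ?_
  · rw [isHermitian_iff_isSymm]
    exact (isSymm_hessMat hp).sub (isSymm_hessMat hu)
  have hnonpos := fderiv_fderiv_nonpos_of_isLocalMax (hu.sub hp) hmax (WithLp.toLp 2 v)
  rw [← dotProduct_hessMat_mulVec, hessMat_sub hu hp, sub_mulVec, dotProduct_sub] at hnonpos
  simp only [star_trivial, sub_mulVec, dotProduct_sub]
  linarith

theorem GardingMatrix.matSk_hessMat_le_of_isLocalMax (h : GardingMatrix n k (hessMat n u x))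
    (hk : k ≤ n) (hu : ContDiffAt ℝ 2 u x) (hp : ContDiffAt ℝ 2 p x)
    (hmax : IsLocalMax (fun y => u y - p y) x) {j : ℕ} (hj : j ≤ k) :
    matSk n j (hessMat n u x) ≤ matSk n j (hessMat n p x) := by
  simpa using h.matSk_le_add hk (posSemidef_hessMat_sub_of_isLocalMax hu hp hmax) hj

theorem hasDerivAt_hessMat_apply_add_smul (hu : ContDiffAt ℝ 3 u x) (e : Euc n) (i j : Fin n) :
    HasDerivAt (fun t : ℝ => hessMat n u (x + t • e) i j)
      (hessMat n (fun y => fderiv ℝ u y e) x i j) 0 := by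
  have hdiff : DifferentiableAt ℝ
      (fun y => fderiv ℝ (fderiv ℝ u) y (ebasis n i) (ebasis n j)) x :=
    ((differentiableAt_fderiv_of_contDiffAt (contDiffAt_fderiv_apply hu (ebasis n j))).clm_apply
      (differentiableAt_const (ebasis n i))).congr_of_eventuallyEq <| by
        filter_upwards [hu.eventually (by simp)] with y hy
        exact fderiv_fderiv_apply (hy.of_le (by norm_num)) _ _
  simp only [hessMat_apply]
  rw [fderiv_fderiv_fderiv_apply hu]
  simpa using hasDerivAt_apply_add_smul (x := x) (v := e) (t := 0) (by simpa using hdiff)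

section

attribute [local instance] Matrix.normedAddCommGroup Matrix.normedSpace

theorem fderiv_matSk_hessMat_fderiv_apply (hk : k ≤ n) {c : ℝ} (hu : ContDiffAt ℝ 3 u x)
    (hS : ∀ᶠ y in 𝓝 x, matSk n k (hessMat n u y) = c) (e : Euc n) :
    fderiv ℝ (matSk n k) (hessMat n u x) (hessMat n (fun y => fderiv ℝ u y e) x) = 0 := by
  have hcurve : HasDerivAt (fun t : ℝ => hessMat n u (x + t • e))
      (hessMat n (fun y => fderiv ℝ u y e) x) 0 :=
    hasDerivAt_pi.2 fun i => hasDerivAt_pi.2 fun j => hasDerivAt_hessMat_apply_add_smul hu e i j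
  have hchain := (differentiable_matSk hk _).hasFDerivAt.comp_hasDerivAt 0 hcurve
  have hconst : (fun t : ℝ => matSk n k (hessMat n u (x + t • e))) =ᶠ[𝓝 0] fun _ => c :=
    (tendsto_add_smul_nhds_zero x e).eventually hS
  have hzero := hchain.unique ((hasDerivAt_const 0 c).congr_of_eventuallyEq hconst)
  rwa [zero_smul, add_zero] at hzero

end

theorem quadA_eq_dotProduct (A : Matrix (Fin n) (Fin n) ℝ) (x : Euc n) :
    quadA n A x = 1 / 2 * (x.ofLp ⬝ᵥ A *ᵥ x.ofLp) := by
  simp [quadA, dotProduct, mulVec, Finset.mul_sum, mul_assoc]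

theorem contDiff_quadA (A : Matrix (Fin n) (Fin n) ℝ) {m : WithTop ℕ∞} :
    ContDiff ℝ m (quadA n A) := by
  unfold quadA
  fun_prop

theorem hessMat_quadA {A : Matrix (Fin n) (Fin n) ℝ} (hA : A.IsSymm) :
    hessMat n (quadA n A) x = A := by
  set T := toEuclideanCLM (𝕜 := ℝ) A
  have hT (y v : Euc n) : inner ℝ y (T v) = inner ℝ (T y) v := by
    rw [inner_toEuclideanCLM, real_inner_comm, inner_toEuclideanCLM, dotProduct_mulVec,
      ← mulVec_transpose, hA.eq, dotProduct_comm]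
  have hquad (y : Euc n) : HasFDerivAt (quadA n A) (innerSL ℝ (T y)) y := by
    have hinner := ((hasFDerivAt_id y).inner ℝ T.hasFDerivAt).const_mul (1 / 2)
    refine (hinner.congr_of_eventuallyEq (.of_forall fun z => ?_)).congr_fderiv ?_
    · simp [quadA_eq_dotProduct, T, inner_toEuclideanCLM]
    · ext v
      simp [hT, real_inner_comm v]
      ring
  ext i j
  have hL : HasFDerivAt (fun y => innerSL ℝ (T y) (ebasis n j))
      ((innerSL ℝ (ebasis n j)).comp T) x := by
    refine ((innerSL ℝ (ebasis n j)).comp T).hasFDerivAt.congr_of_eventuallyEq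
      (.of_forall fun y => ?_)
    simp [real_inner_comm]
  rw [hessMat_apply, fderiv_fderiv_apply_eq_of_eventually (contDiff_quadA A).contDiffAt
    (.of_forall hquad) hL]
  simp [T, inner_toEuclideanCLM, ebasis, hA.apply]

theorem hessMat_comp_norm_sub_sq {φ φ' : ℝ → ℝ} {φ'' : ℝ} {z : Euc n}
    (hφ : ContDiffAt ℝ 2 φ (‖x - z‖ ^ 2))
    (hφ' : ∀ᶠ r in 𝓝 (‖x - z‖ ^ 2), HasDerivAt φ (φ' r) r)
    (hφ'' : HasDerivAt φ' φ'' (‖x - z‖ ^ 2)) :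
    hessMat n (fun y => φ (‖y - z‖ ^ 2)) x = (2 * φ' (‖x - z‖ ^ 2)) • (1 : Matrix _ _ ℝ) +
      (4 * φ'') • vecMulVec (x - z).ofLp (x - z).ofLp := by
  ext i j
  rw [hessMat_apply, fderiv_fderiv_comp_apply (contDiff_norm_sub_sq z).contDiffAt hφ hφ' hφ'',
    fderiv_fderiv_norm_sub_sq_apply, fderiv_norm_sub_sq_apply, fderiv_norm_sub_sq_apply]
  simp [ebasis, one_apply, vecMulVec_apply, EuclideanSpace.inner_single_right, eq_comm (a := j)]
  split_ifs <;> ring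

end HessianMatrix

section ComparisonPrinciple

open Matrix Metric

variable {n k : ℕ} {a : Fin n → ℝ} {x₀ x : Euc n} {ε c : ℝ} {u : Euc n → ℝ}

theorem exists_isLocalMax_compl_closedBall {X : Type*} [PseudoMetricSpace X] [ProperSpace X]
    {w : X → ℝ} {o p z : X} {R r : ℝ} (hw : ContinuousOn w (ball p r)ᶜ) (hz : z ∈ (ball p r)ᶜ)
    (hzR : z ∈ closedBall o R) (hin : ∀ y ∈ sphere p r, w y < w z)
    (hout : ∀ y ∈ (ball p r)ᶜ, y ∈ sphere o R → w y < w z) :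
    ∃ x ∈ (closedBall p r)ᶜ, IsLocalMax w x := by
  have hcompact : IsCompact (closedBall o R ∩ (ball p r)ᶜ) :=
    (isCompact_closedBall o R).inter_right isOpen_ball.isClosed_compl
  have hsub : ball o R ∩ (closedBall p r)ᶜ ⊆ closedBall o R ∩ (ball p r)ᶜ :=
    Set.inter_subset_inter ball_subset_closedBall
      (Set.compl_subset_compl.2 ball_subset_closedBall)
  have hbdry : ∀ y ∈ (closedBall o R ∩ (ball p r)ᶜ) \ (ball o R ∩ (closedBall p r)ᶜ),
      w y < w z := by
    rintro y ⟨⟨hyR, hyr⟩, hy⟩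
    by_cases hyp : y ∈ closedBall p r
    · exact hin y (le_antisymm hyp (not_lt.1 hyr))
    · exact hout y hyr (le_antisymm hyR (not_lt.1 fun hlt => hy ⟨hlt, hyp⟩))
  obtain ⟨x, hx, hmax⟩ := hcompact.exists_isLocalMax_mem_open hsub
    (hw.mono Set.inter_subset_right) ⟨hzR, hz⟩ hbdry
    (isOpen_ball.inter isClosed_closedBall.isOpen_compl)
  exact ⟨x, hx.2, hmax⟩

theorem exists_forall_lt_norm_of_tendsto_cocompact {w : Euc n → ℝ} {η : ℝ}
    (hw : Tendsto w (cocompact (Euc n)) (𝓝 0)) (hη : 0 < η) (x : Euc n) :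
    ∃ R, ‖x‖ ≤ R ∧ ∀ y : Euc n, ‖y‖ = R → w y < η := by
  obtain ⟨r, hr⟩ := closedBall_compl_subset_of_mem_cocompact
    (hw.eventually (gt_mem_nhds hη)) (0 : Euc n)
  refine ⟨max (r + 1) ‖x‖, le_max_right _ _, fun y hy => hr ?_⟩
  simp [hy]

theorem exists_mem_Ioo_forall_mul_lt {X : Type*} [TopologicalSpace X] {K : Set X} {f : X → ℝ}
    {η : ℝ} (hK : IsCompact K) (hf : ContinuousOn f K) (hη : 0 < η) :
    ∃ d ∈ Set.Ioo (0 : ℝ) 1, ∀ y ∈ K, d * f y < η := by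
  obtain ⟨Q, hQ⟩ := hK.exists_bound_of_continuousOn hf
  have htends : Tendsto (fun d : ℝ => d * |Q|) (𝓝[>] 0) (𝓝 0) := by
    simpa using ((continuous_mul_const |Q|).tendsto 0).mono_left nhdsWithin_le_nhds
  obtain ⟨d, hdQ, hd⟩ := ((htends.eventually (gt_mem_nhds hη)).and
    (Ioo_mem_nhdsGT one_pos)).exists
  refine ⟨d, hd, fun y hy => lt_of_le_of_lt ?_ hdQ⟩
  exact mul_le_mul_of_nonneg_left
    ((le_abs_self _).trans ((hQ y hy).trans (le_abs_self Q))) hd.1.le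

theorem contDiff_const_mul_quadA_add_const (A : Matrix (Fin n) (Fin n) ℝ) (s c : ℝ) {m : ℕ} :
    ContDiff ℝ m (fun y => s * quadA n A y + c) :=
  (contDiff_const.mul (contDiff_quadA A)).add contDiff_const

theorem matSk_hessMat_const_mul_quadA_add_const {A : Matrix (Fin n) (Fin n) ℝ} (hk : k ≤ n)
    (hA : A.IsSymm) (s c : ℝ) (x : Euc n) :
    matSk n k (hessMat n (fun y => s * quadA n A y + c) x) = s ^ k * matSk n k A := by
  have hquad : ContDiffAt ℝ 2 (fun y => s * quadA n A y) x :=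
    contDiffAt_const.mul (contDiff_quadA A).contDiffAt
  rw [hessMat_add hquad contDiffAt_const, hessMat_const, add_zero,
    hessMat_const_mul _ (contDiff_quadA A).contDiffAt, hessMat_quadA hA, matSk_smul hk]

theorem quadA_diagonal_nonneg (ha : ∀ i, 0 ≤ a i) (x : Euc n) :
    0 ≤ quadA n (diagonal a) x := by
  rw [quadA_eq_dotProduct]
  simpa using (PosSemidef.diagonal ha).dotProduct_mulVec_nonneg x.ofLp

namespace ExtBallSol

variable (h : ExtBallSol n k a x₀ ε c u)
include h

theorem contDiffAt {m : ℕ} (hx : x ∈ (ball x₀ ε)ᶜ) : ContDiffAt ℝ m u x := by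
  obtain ⟨⟨U, hU, hsub, hu⟩, -⟩ := h
  exact (hu.contDiffAt (hU.mem_nhds (hsub hx))).of_le (mod_cast le_top)

theorem continuousOn : ContinuousOn u (ball x₀ ε)ᶜ := fun _ hx =>
  (h.contDiffAt (m := 0) hx).continuousAt.continuousWithinAt

theorem gardingMatrix_hessMat (hx : x ∈ (closedBall x₀ ε)ᶜ) :
    GardingMatrix n k (hessMat n u x) := by
  have hx' : x ∈ (closure (ball x₀ ε))ᶜ := fun hc => hx (closure_ball_subset_closedBall hc)
  have hxball : x ∈ (ball x₀ ε)ᶜ := fun hc => hx (ball_subset_closedBall hc)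
  refine ⟨isSymm_hessMat (h.contDiffAt (m := 2) hxball), fun j hj => ?_⟩
  rcases j.eq_zero_or_pos with rfl | hpos
  · simp
  · exact h.2.1 x hx' j hpos hj

theorem matSk_hessMat_eq_one (hx : x ∈ (closedBall x₀ ε)ᶜ) : matSk n k (hessMat n u x) = 1 :=
  h.2.2.1 x fun hc => hx (closure_ball_subset_closedBall hc)

theorem le_paraboloid (hk0 : k ≠ 0) (hkn : k ≤ n) (ha : ∀ i, 0 ≤ a i)
    (hA : matSk n k (diagonal a) = 1) (hc : 0 ≤ c) (hx : x ∈ (ball x₀ ε)ᶜ) :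
    u x ≤ quadA n (diagonal a) x + c := by
  by_contra! hlt
  set η := u x - (quadA n (diagonal a) x + c)
  have hη : 0 < η := sub_pos.2 hlt
  obtain ⟨R, hxR, hR⟩ :=
    exists_forall_lt_norm_of_tendsto_cocompact h.2.2.2.2 (half_pos hη) x
  have hquad : Continuous (quadA n (diagonal a)) := (contDiff_quadA (m := 0) _).continuous
  obtain ⟨d, ⟨hd0, hd1⟩, hd⟩ := exists_mem_Ioo_forall_mul_lt (isCompact_closedBall (0 : Euc n) R)
    hquad.continuousOn (half_pos hη)
  have hqx := quadA_diagonal_nonneg ha x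
  have hdx := mul_nonneg hd0.le hqx
  obtain ⟨z, hz, hmax⟩ := exists_isLocalMax_compl_closedBall (o := 0) (R := R)
    (w := fun y => u y - ((1 - d) * quadA n (diagonal a) y + c))
    (h.continuousOn.sub (contDiff_const_mul_quadA_add_const (m := 0) _ _ _).continuous.continuousOn)
    hx (by simpa using hxR)
    (fun y hy => by
      have hdy := mul_nonneg (sub_nonneg.2 hd1.le) (quadA_diagonal_nonneg ha y)
      simp only [h.2.2.2.1 y hy]
      linarith)
    (fun y _ hyR => by
      have := hR y (by simpa using hyR)
      have := hd y (sphere_subset_closedBall hyR)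
      linarith)
  have hz' : z ∈ (ball x₀ ε)ᶜ := fun hc => hz (ball_subset_closedBall hc)
  have hle := (h.gardingMatrix_hessMat hz).matSk_hessMat_le_of_isLocalMax hkn
    (h.contDiffAt (m := 2) hz') (contDiff_const_mul_quadA_add_const _ _ _).contDiffAt hmax le_rfl
  rw [h.matSk_hessMat_eq_one hz,
    matSk_hessMat_const_mul_quadA_add_const hkn (isSymm_diagonal a), hA, mul_one] at hle
  exact hle.not_gt (pow_lt_one₀ (by linarith) (by linarith) hk0)

end ExtBallSol

end ComparisonPrinciple

section Barrier

open Matrix Metric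

/-- The profile of the barrier as a function of the squared distance to the centre, so that
`radialProfile (‖y‖ ^ 2) = -arsinh ‖y‖⁻¹`. -/
noncomputable def radialProfile (r : ℝ) : ℝ := -Real.arsinh (√r)⁻¹

/-- The derivative of `radialProfile` on the positive half-line. -/
noncomputable def radialProfileDeriv (r : ℝ) : ℝ := 1 / 2 * (r⁻¹ * (√(1 + r))⁻¹)

theorem contDiffAt_radialProfile {r : ℝ} (hr : 0 < r) : ContDiffAt ℝ 2 radialProfile r :=
  (Real.contDiff_arsinh.contDiffAt.comp r
    ((Real.contDiffAt_sqrt hr.ne').inv (Real.sqrt_pos.2 hr).ne')).neg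

theorem hasDerivAt_radialProfile {r : ℝ} (hr : 0 < r) :
    HasDerivAt radialProfile (radialProfileDeriv r) r := by
  have hsqrt := Real.sqrt_pos.2 hr
  have hsqrt' : 0 < √(1 + r) := Real.sqrt_pos.2 (by linarith)
  have harsinh : √(1 + (√r)⁻¹ ^ 2) = √(1 + r) / √r := by
    rw [inv_pow, Real.sq_sqrt hr.le, ← Real.sqrt_div (by linarith)]
    congr 1
    field_simp
    ring
  refine ((Real.hasDerivAt_sqrt hr.ne').fun_inv hsqrt.ne').arsinh.fun_neg.congr_deriv ?_
  rw [harsinh, Real.sq_sqrt hr.le, smul_eq_mul, radialProfileDeriv]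
  field_simp

theorem hasDerivAt_radialProfileDeriv {r : ℝ} (hr : 0 < r) :
    HasDerivAt radialProfileDeriv
      (-radialProfileDeriv r / r * (1 + r / (1 + r) / 2)) r := by
  have hr' : 0 < 1 + r := by linarith
  have hsqrt := Real.sqrt_pos.2 hr'
  have hderiv : HasDerivAt (fun r : ℝ => √(1 + r)) (1 / (2 * √(1 + r))) r := by
    simpa using ((hasDerivAt_id r).const_add 1).sqrt hr'.ne'
  refine (((hasDerivAt_id r).fun_inv hr.ne').fun_mul
    (hderiv.fun_inv hsqrt.ne')).const_mul (1 / 2) |>.congr_deriv ?_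
  simp only [id, Real.sq_sqrt hr'.le, radialProfileDeriv]
  field_simp
  ring

theorem radialProfileDeriv_pos {r : ℝ} (hr : 0 < r) : 0 < radialProfileDeriv r := by
  have := Real.sqrt_pos.2 (by linarith : 0 < 1 + r)
  unfold radialProfileDeriv
  positivity

theorem two_mul_radialProfileDeriv_mul_le_one {r : ℝ} (hr : 0 < r) :
    2 * radialProfileDeriv r * (r / (1 + r)) ≤ 1 := by
  have hsqrt : 1 ≤ √(1 + r) := Real.one_le_sqrt.2 (by linarith)
  calc 2 * radialProfileDeriv r * (r / (1 + r)) = (√(1 + r))⁻¹ * (1 + r)⁻¹ := by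
        unfold radialProfileDeriv
        field_simp
    _ ≤ 1 := mul_le_one₀ (inv_le_one_of_one_le₀ hsqrt) (by positivity)
        (inv_le_one_of_one_le₀ (by linarith))

variable {n k : ℕ} {a : Fin n → ℝ} {x₀ x : Euc n} {ε c M : ℝ} {u : Euc n → ℝ}

/-- The lower barrier `½ xᵀAx + c - M arsinh |x - x₀|⁻¹` for `A = diag a`, singular at `x₀`
(where `0⁻¹ = 0` makes it finite) and asymptotic to `½ xᵀAx + c` at infinity. -/
noncomputable def barrier (n : ℕ) (a : Fin n → ℝ) (x₀ : Euc n) (c M : ℝ) (x : Euc n) : ℝ :=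
  quadA n (diagonal a) x + c + M * radialProfile (‖x - x₀‖ ^ 2)

theorem barrier_eq (x : Euc n) :
    barrier n a x₀ c M x = quadA n (diagonal a) x + c - M * Real.arsinh ‖x - x₀‖⁻¹ := by
  simp only [barrier, radialProfile, Real.sqrt_sq (norm_nonneg _)]
  ring

theorem barrier_le_paraboloid (hM : 0 ≤ M) (x : Euc n) :
    barrier n a x₀ c M x ≤ quadA n (diagonal a) x + c := by
  rw [barrier_eq]
  exact sub_le_self _ (mul_nonneg hM (Real.arsinh_nonneg_iff.2 (by positivity)))

theorem contDiffAt_radialProfile_norm_sub_sq (hx : x ≠ x₀) :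
    ContDiffAt ℝ 2 (fun y => radialProfile (‖y - x₀‖ ^ 2)) x := by
  have hpos : 0 < ‖x - x₀‖ ^ 2 := pow_pos (norm_pos_iff.2 (sub_ne_zero.2 hx)) 2
  exact ContDiffAt.comp (g := radialProfile) x (contDiffAt_radialProfile hpos)
    (contDiff_norm_sub_sq x₀).contDiffAt

theorem contDiffAt_barrier (hx : x ≠ x₀) : ContDiffAt ℝ 2 (barrier n a x₀ c M) x :=
  ((contDiff_quadA _).contDiffAt.add contDiffAt_const).add
    (contDiffAt_const.mul (contDiffAt_radialProfile_norm_sub_sq hx))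

theorem hessMat_barrier (hx : x ≠ x₀) :
    hessMat n (barrier n a x₀ c M) x =
      diagonal (fun i => a i + 2 * M * radialProfileDeriv (‖x - x₀‖ ^ 2)) +
        (-(2 * M * radialProfileDeriv (‖x - x₀‖ ^ 2) *
          (2 + ‖x - x₀‖ ^ 2 / (1 + ‖x - x₀‖ ^ 2)) / ‖x - x₀‖ ^ 2)) •
          vecMulVec (x - x₀).ofLp (x - x₀).ofLp := by
  have hpos : 0 < ‖x - x₀‖ ^ 2 := pow_pos (norm_pos_iff.2 (sub_ne_zero.2 hx)) 2
  have hprofile := contDiffAt_radialProfile_norm_sub_sq hx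
  have hquad : ContDiffAt ℝ 2 (quadA n (diagonal a)) x := (contDiff_quadA _).contDiffAt
  have hev : ∀ᶠ r in 𝓝 (‖x - x₀‖ ^ 2), HasDerivAt radialProfile (radialProfileDeriv r) r :=
    (eventually_gt_nhds hpos).mono fun r hr => hasDerivAt_radialProfile hr
  unfold barrier
  rw [hessMat_add (hquad.add contDiffAt_const) (contDiffAt_const.mul hprofile),
    hessMat_add hquad contDiffAt_const, hessMat_const, add_zero, hessMat_const_mul _ hprofile,
    hessMat_quadA (isSymm_diagonal a), hessMat_comp_norm_sub_sq (contDiffAt_radialProfile hpos)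
      hev (hasDerivAt_radialProfileDeriv hpos), smul_add, ← add_assoc, smul_smul, smul_smul,
    ← diagonal_one, ← diagonal_smul, diagonal_add]
  congr 2
  · ext i
    simp
    ring
  · field_simp
    ring

theorem matSk_diagonal_lt_matSk_hessMat_barrier (hn : 3 ≤ n) {j : ℕ} (hj0 : j ≠ 0)
    (hjn : 2 * j ≤ n) (hM : 0 < M) (ha : ∀ i, M ≤ a i) (hx : x ≠ x₀) :
    matSk n j (diagonal a) < matSk n j (hessMat n (barrier n a x₀ c M) x) := by
  obtain ⟨m, rfl⟩ := Nat.exists_eq_succ_of_ne_zero hj0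
  have hpos : 0 < ‖x - x₀‖ ^ 2 := pow_pos (norm_pos_iff.2 (sub_ne_zero.2 hx)) 2
  have hnorm : (x - x₀).ofLp ⬝ᵥ (x - x₀).ofLp = ‖x - x₀‖ ^ 2 := by
    rw [dotProduct_ofLp, real_inner_self_eq_norm_sq]
  have hprofile := two_mul_radialProfileDeriv_mul_le_one hpos
  rw [hessMat_barrier hx, ← hnorm]
  rw [← hnorm] at hpos hprofile
  refine matSk_diagonal_lt_matSk_diagonal_add hn hjn (fun i => hM.trans_le (ha i))
    (mul_pos (by positivity) (radialProfileDeriv_pos hpos))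
    ((div_lt_one (by linarith)).2 (by linarith)) (fun i => ?_) hpos
  calc 2 * M * radialProfileDeriv _ * _ = M * (2 * radialProfileDeriv _ * _) := by ring
    _ ≤ M := mul_le_of_le_one_right hM.le hprofile
    _ ≤ a i := ha i

theorem matSk_diagonal_pos {j : ℕ} (hj : j ≤ n) (ha : ∀ i, 0 < a i) :
    0 < matSk n j (diagonal a) := by
  rw [matSk_diagonal hj]
  exact esymmOn_pos (fun i _ => ha i) (by simpa using hj)

theorem gardingMatrix_hessMat_barrier (hn : 3 ≤ n) (hkn : 2 * k ≤ n) (hM : 0 < M)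
    (ha : ∀ i, M ≤ a i) (hx : x ≠ x₀) :
    GardingMatrix n k (hessMat n (barrier n a x₀ c M) x) := by
  refine ⟨isSymm_hessMat (contDiffAt_barrier hx), fun j hj => ?_⟩
  rcases eq_or_ne j 0 with rfl | hj0
  · simp
  · exact (matSk_diagonal_pos (by omega) fun i => hM.trans_le (ha i)).trans
      (matSk_diagonal_lt_matSk_hessMat_barrier hn hj0 (by omega) hM ha hx)

theorem ExtBallSol.barrier_le (h : ExtBallSol n k a x₀ ε c u) (hn : 3 ≤ n) (hk0 : k ≠ 0)
    (hkn : 2 * k ≤ n) (hA : matSk n k (diagonal a) = 1) (hε : 0 < ε) (hM : 0 < M)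
    (ha : ∀ i, M ≤ a i)
    (hbdry : ∀ y ∈ sphere x₀ ε, quadA n (diagonal a) y + c ≤ M * Real.arsinh ε⁻¹)
    (hx : x ∈ (ball x₀ ε)ᶜ) : barrier n a x₀ c M x ≤ u x := by
  have hne : ∀ {y}, y ∈ (ball x₀ ε)ᶜ → y ≠ x₀ := fun hy hyx => hy (hyx ▸ mem_ball_self hε)
  by_contra! hlt
  obtain ⟨R, hxR, hR⟩ := exists_forall_lt_norm_of_tendsto_cocompact
    (w := fun y => (quadA n (diagonal a) y + c) - u y) (by simpa using h.2.2.2.2.neg)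
    (sub_pos.2 hlt) x
  obtain ⟨z, hz, hmax⟩ := exists_isLocalMax_compl_closedBall (o := 0) (R := R)
    (w := fun y => barrier n a x₀ c M y - u y)
    (ContinuousOn.sub (fun y hy =>
      (contDiffAt_barrier (hne hy)).continuousAt.continuousWithinAt) h.continuousOn) hx
    (by simpa using hxR)
    (fun y hy => by
      have := hbdry y hy
      simp only [h.2.2.2.1 y hy, barrier_eq y, mem_sphere_iff_norm.1 hy]
      linarith)
    (fun y _ hyR => by
      have := hR y (by simpa using hyR)
      have := barrier_le_paraboloid (a := a) (x₀ := x₀) (c := c) hM.le y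
      linarith)
  have hz' : z ∈ (ball x₀ ε)ᶜ := fun hc => hz (ball_subset_closedBall hc)
  have hle := (gardingMatrix_hessMat_barrier hn hkn hM ha (hne hz')).matSk_hessMat_le_of_isLocalMax
    (by omega) (contDiffAt_barrier (hne hz')) (h.contDiffAt (m := 2) hz') hmax le_rfl
  rw [h.matSk_hessMat_eq_one hz, ← hA] at hle
  exact hle.not_gt (matSk_diagonal_lt_matSk_hessMat_barrier hn hk0 hkn hM ha (hne hz'))

end Barrier

section GradientEstimate

open Matrix Metric

/-- The concave weight of the Bernstein argument for a function with values in `[-N, N]`. -/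
def bernsteinWeight (N t : ℝ) : ℝ := 16 * N ^ 2 - (t + 2 * N) ^ 2

theorem seven_mul_sq_le_bernsteinWeight {N t : ℝ} (ht : |t| ≤ N) :
    7 * N ^ 2 ≤ bernsteinWeight N t := by
  obtain ⟨hlo, hhi⟩ := abs_le.1 ht
  unfold bernsteinWeight
  nlinarith

theorem bernsteinWeight_le_fifteen_mul_sq {N t : ℝ} (ht : |t| ≤ N) :
    bernsteinWeight N t ≤ 15 * N ^ 2 := by
  obtain ⟨hlo, hhi⟩ := abs_le.1 ht
  unfold bernsteinWeight
  nlinarith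

theorem bernsteinWeight_pos {N t : ℝ} (hN : 0 < N) (ht : |t| ≤ N) : 0 < bernsteinWeight N t :=
  (by positivity : 0 < 7 * N ^ 2).trans_le (seven_mul_sq_le_bernsteinWeight ht)

theorem contDiff_bernsteinWeight (N : ℝ) : ContDiff ℝ 2 (bernsteinWeight N) :=
  contDiff_const.sub ((contDiff_id.add contDiff_const).pow 2)

theorem hasDerivAt_bernsteinWeight (N t : ℝ) :
    HasDerivAt (bernsteinWeight N) (-(2 * (t + 2 * N))) t := by
  refine ((((hasDerivAt_id t).add_const (2 * N)).fun_pow 2).const_sub (16 * N ^ 2)).congr_deriv ?_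
  simp

section InnerProductSpace

variable {E : Type*} [NormedAddCommGroup E] [InnerProductSpace ℝ E] {u : E → ℝ} {x z e : E}
  {R N G p : ℝ}

theorem exists_norm_eq_one_forall_eq_norm_mul_inner [CompleteSpace E] {L : E →L[ℝ] ℝ}
    (hL : L ≠ 0) : ∃ e : E, ‖e‖ = 1 ∧ ∀ v, L v = ‖L‖ * inner ℝ e v := by
  have hpos := norm_pos_iff.2 hL
  refine ⟨‖L‖⁻¹ • (InnerProductSpace.toDual ℝ E).symm L, ?_, fun v => ?_⟩
  · rw [norm_smul, LinearIsometryEquiv.norm_map, norm_inv, norm_norm, inv_mul_cancel₀ hpos.ne']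
  · rw [real_inner_smul_left, InnerProductSpace.toDual_symm_apply, mul_inv_cancel_left₀ hpos.ne']

theorem fderiv_const_sub_norm_sub_sq_apply (r : ℝ) (z x v : E) :
    fderiv ℝ (fun y => r - ‖y - z‖ ^ 2) x v = -(2 * inner ℝ (x - z) v) := by
  rw [fderiv_const_sub, _root_.neg_apply, fderiv_norm_sub_sq_apply]

theorem fderiv_fderiv_const_sub_norm_sub_sq_apply (r : ℝ) (z x v : E) :
    fderiv ℝ (fderiv ℝ fun y => r - ‖y - z‖ ^ 2) x v v = -(2 * ‖v‖ ^ 2) := by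
  rw [fderiv_fderiv_comp_apply (φ := fun s => r - s) (φ' := fun _ => -1)
    (contDiff_norm_sub_sq z).contDiffAt (contDiffAt_const.sub contDiffAt_id)
    (.of_forall fun s => (hasDerivAt_id s).const_sub r) (hasDerivAt_const _ _),
    fderiv_fderiv_norm_sub_sq_apply, real_inner_self_eq_norm_sq]
  ring

/-- The auxiliary function `(R² - |y - z|²) ∂ₑu - G w(u)` of the interior gradient estimate,
with `w = bernsteinWeight N`. -/
noncomputable def bernsteinFun (u : E → ℝ) (z e : E) (R N G : ℝ) (y : E) : ℝ :=
  (R ^ 2 - ‖y - z‖ ^ 2) * fderiv ℝ u y e + -G * bernsteinWeight N (u y)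

theorem contDiffAt_bernsteinFun (hu : ContDiffAt ℝ 3 u x) :
    ContDiffAt ℝ 2 (bernsteinFun u z e R N G) x := by
  have hu2 : ContDiffAt ℝ 2 u x := hu.of_le (by norm_num)
  exact ((contDiffAt_const.sub (contDiff_norm_sub_sq z).contDiffAt).mul
    (contDiffAt_fderiv_apply hu e)).add (contDiffAt_const.mul
      ((contDiff_bernsteinWeight N).contDiffAt.comp x hu2))

theorem fderiv_bernsteinFun_apply (hu : ContDiffAt ℝ 3 u x) (v : E) :
    fderiv ℝ (bernsteinFun u z e R N G) x v =
      (R ^ 2 - ‖x - z‖ ^ 2) * fderiv ℝ (fderiv ℝ u) x v e -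
        2 * inner ℝ (x - z) v * fderiv ℝ u x e + 2 * G * (u x + 2 * N) * fderiv ℝ u x v := by
  have hu2 : ContDiffAt ℝ 2 u x := hu.of_le (by norm_num)
  have hdir := ((contDiffAt_fderiv_apply hu e).differentiableAt (by simp)).hasFDerivAt
  have hweight := (hasDerivAt_bernsteinWeight N (u x)).comp_hasFDerivAt x
    (hu2.differentiableAt (by simp)).hasFDerivAt
  have htotal : HasFDerivAt (bernsteinFun u z e R N G) _ x :=
    (((hasFDerivAt_norm_sub_sq z x).const_sub (R ^ 2)).fun_mul hdir).add (hweight.const_mul (-G))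
  rw [htotal.fderiv, fderiv_fderiv_apply hu2]
  simp [-map_sub]
  ring

theorem fderiv_fderiv_bernsteinFun_apply (hu : ContDiffAt ℝ 3 u x) (v : E) :
    fderiv ℝ (fderiv ℝ (bernsteinFun u z e R N G)) x v v =
      (R ^ 2 - ‖x - z‖ ^ 2) * fderiv ℝ (fderiv ℝ fun y => fderiv ℝ u y e) x v v -
        4 * inner ℝ (x - z) v * fderiv ℝ (fderiv ℝ u) x v e - 2 * ‖v‖ ^ 2 * fderiv ℝ u x e +
        2 * G * (fderiv ℝ u x v) ^ 2 +
        2 * G * (u x + 2 * N) * fderiv ℝ (fderiv ℝ u) x v v := by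
  have hu2 : ContDiffAt ℝ 2 u x := hu.of_le (by norm_num)
  have hdir := contDiffAt_fderiv_apply hu e
  have hcut : ContDiffAt ℝ 2 (fun y => R ^ 2 - ‖y - z‖ ^ 2) x :=
    contDiffAt_const.sub (contDiff_norm_sub_sq z).contDiffAt
  have hcomp : ContDiffAt ℝ 2 (fun t => -G * bernsteinWeight N t) (u x) :=
    contDiffAt_const.mul (contDiff_bernsteinWeight N).contDiffAt
  have hweight : ContDiffAt ℝ 2 (fun y => -G * bernsteinWeight N (u y)) x :=
    ContDiffAt.comp (g := fun t => -G * bernsteinWeight N t) x hcomp hu2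
  have hcomp' (t : ℝ) : HasDerivAt (fun t => -G * bernsteinWeight N t) (2 * G * (t + 2 * N)) t :=
    ((hasDerivAt_bernsteinWeight N t).const_mul (-G)).congr_deriv (by ring)
  have hcomp'' : HasDerivAt (fun t => 2 * G * (t + 2 * N)) (2 * G) (u x) := by
    simpa using ((hasDerivAt_id (u x)).add_const (2 * N)).const_mul (2 * G)
  unfold bernsteinFun
  rw [fderiv_fderiv_add_apply (hcut.mul hdir) hweight, fderiv_fderiv_mul_apply hcut hdir,
    fderiv_fderiv_comp_apply hu2 hcomp (.of_forall hcomp') hcomp'',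
    fderiv_const_sub_norm_sub_sq_apply, fderiv_fderiv_const_sub_norm_sub_sq_apply,
    ← fderiv_fderiv_apply hu2]
  ring

theorem mul_fderiv_fderiv_eq_of_isLocalMax_bernsteinFun (hu : ContDiffAt ℝ 3 u x) (he : ‖e‖ = 1)
    (hgrad : ∀ v, fderiv ℝ u x v = p * inner ℝ e v)
    (hmax : IsLocalMax (bernsteinFun u z e R N G) x) (v : E) :
    (R ^ 2 - ‖x - z‖ ^ 2) * fderiv ℝ (fderiv ℝ u) x v e =
      p * (2 * inner ℝ (x - z) v - 2 * G * (u x + 2 * N) * inner ℝ e v) := by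
  have hcrit := fderiv_bernsteinFun_apply (z := z) (e := e) (R := R) (N := N) (G := G) hu v
  rw [hmax.fderiv_eq_zero, _root_.zero_apply, hgrad, hgrad, real_inner_self_eq_norm_sq, he] at hcrit
  linarith

theorem fderiv_fderiv_nonpos_of_isLocalMax_bernsteinFun (hu : ContDiffAt ℝ 3 u x) (he : ‖e‖ = 1)
    (hgrad : ∀ v, fderiv ℝ u x v = p * inner ℝ e v)
    (hmax : IsLocalMax (bernsteinFun u z e R N G) x) (hp : 0 ≤ p) (hx : ‖x - z‖ < R)
    (hux : |u x| ≤ N) (hG : 0 ≤ G) (hRG : R ≤ N * G) : fderiv ℝ (fderiv ℝ u) x e e ≤ 0 := by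
  have hcut : 0 < R ^ 2 - ‖x - z‖ ^ 2 := sub_pos.2 (pow_lt_pow_left₀ hx (norm_nonneg _) two_ne_zero)
  have hinner : inner ℝ (x - z) e ≤ R := by
    simpa [he] using (real_inner_le_norm (x - z) e).trans (by rw [he, mul_one]; exact hx.le)
  have hweight : G * N ≤ G * (u x + 2 * N) :=
    mul_le_mul_of_nonneg_left (by linarith [neg_le_of_abs_le hux]) hG
  have hcrit := mul_fderiv_fderiv_eq_of_isLocalMax_bernsteinFun hu he hgrad hmax e
  rw [real_inner_self_eq_norm_sq, he] at hcrit
  refine nonpos_of_mul_nonpos_right (hcrit.trans_le ?_) hcut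
  exact mul_nonpos_of_nonneg_of_nonpos hp (by linarith)

theorem mul_inner_sub_mul_inner_le {q : ℝ} (he : ‖e‖ = 1) (hx : ‖x - z‖ ≤ R) (hq0 : 0 ≤ q)
    (hqN : q ≤ 3 * N) (hG : 0 ≤ G) (v : E) :
    4 * inner ℝ (x - z) v * (2 * inner ℝ (x - z) v - 2 * G * q * inner ℝ e v) ≤
      (8 * R ^ 2 + 24 * N * R * G) * ‖v‖ ^ 2 := by
  have hxv : |inner ℝ (x - z) v| ≤ R * ‖v‖ :=
    (abs_real_inner_le_norm _ _).trans (mul_le_mul_of_nonneg_right hx (norm_nonneg v))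
  have hev : |inner ℝ e v| ≤ ‖v‖ := by simpa [he] using abs_real_inner_le_norm e v
  have hsq : inner ℝ (x - z) v ^ 2 ≤ (R * ‖v‖) ^ 2 := sq_le_sq.2 (hxv.trans (le_abs_self _))
  have hcross : q * -(inner ℝ (x - z) v * inner ℝ e v) ≤ 3 * N * (R * ‖v‖ * ‖v‖) := by
    refine (mul_le_mul_of_nonneg_left ((neg_le_abs _).trans ?_) hq0).trans
      (mul_le_mul_of_nonneg_right hqN ?_)
    · rw [abs_mul]
      exact mul_le_mul hxv hev (abs_nonneg _) ((abs_nonneg _).trans hxv)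
    · exact mul_nonneg ((abs_nonneg _).trans hxv) (norm_nonneg v)
  have := mul_le_mul_of_nonneg_left hcross hG
  linarith

/-- Second-order condition, with the mixed derivatives eliminated by the first-order one. -/
theorem sq_mul_fderiv_fderiv_fderiv_le_of_isLocalMax_bernsteinFun (hu : ContDiffAt ℝ 3 u x)
    (he : ‖e‖ = 1) (hgrad : ∀ v, fderiv ℝ u x v = p * inner ℝ e v)
    (hmax : IsLocalMax (bernsteinFun u z e R N G) x) (hp : 0 ≤ p) (hx : ‖x - z‖ ≤ R)
    (hux : |u x| ≤ N) (hG : 0 ≤ G) (v : E) :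
    (R ^ 2 - ‖x - z‖ ^ 2) ^ 2 * fderiv ℝ (fderiv ℝ fun y => fderiv ℝ u y e) x v v ≤
      -(2 * (R ^ 2 - ‖x - z‖ ^ 2) * G * (u x + 2 * N)) * fderiv ℝ (fderiv ℝ u) x v v -
        2 * (R ^ 2 - ‖x - z‖ ^ 2) * G * p ^ 2 * inner ℝ e v ^ 2 +
        p * (10 * R ^ 2 + 24 * N * R * G) * ‖v‖ ^ 2 := by
  obtain ⟨hlo, hhi⟩ := abs_le.1 hux
  have hcrit := mul_fderiv_fderiv_eq_of_isLocalMax_bernsteinFun hu he hgrad hmax v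
  have hsnd := fderiv_fderiv_nonpos_of_isLocalMax (contDiffAt_bernsteinFun hu) hmax v
  rw [fderiv_fderiv_bernsteinFun_apply hu, hgrad, hgrad, real_inner_self_eq_norm_sq, he] at hsnd
  have hcut0 : 0 ≤ R ^ 2 - ‖x - z‖ ^ 2 := sub_nonneg.2 (pow_le_pow_left₀ (norm_nonneg _) hx 2)
  have hcutR : R ^ 2 - ‖x - z‖ ^ 2 ≤ R ^ 2 := sub_le_self _ (sq_nonneg _)
  generalize R ^ 2 - ‖x - z‖ ^ 2 = ρ at *
  have hmixed : 4 * inner ℝ (x - z) v * (ρ * fderiv ℝ (fderiv ℝ u) x v e) ≤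
      p * ((8 * R ^ 2 + 24 * N * R * G) * ‖v‖ ^ 2) := by
    rw [hcrit]
    have := mul_le_mul_of_nonneg_left (mul_inner_sub_mul_inner_le (N := N)
      (q := u x + 2 * N) he hx (by linarith) (by linarith) hG v) hp
    linarith
  have hcutv : p * (ρ * ‖v‖ ^ 2) ≤ p * (R ^ 2 * ‖v‖ ^ 2) := by gcongr
  have := mul_le_mul_of_nonneg_left hsnd hcut0
  linarith

/-- The quantity maximised over `closedBall z R` in the Bernstein argument: the gradient, cut off
at the boundary and weighted by `bernsteinWeight N u`. -/
noncomputable def bernsteinQuotient (u : E → ℝ) (z : E) (R N : ℝ) (x : E) : ℝ :=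
  (R ^ 2 - ‖x - z‖ ^ 2) * ‖fderiv ℝ u x‖ / bernsteinWeight N (u x)

theorem continuousOn_bernsteinQuotient (hN : 0 < N)
    (hu : ∀ x ∈ closedBall z R, ContDiffAt ℝ 1 u x) (hb : ∀ x ∈ closedBall z R, |u x| ≤ N) :
    ContinuousOn (bernsteinQuotient u z R N) (closedBall z R) := by
  intro x hx
  have hcut : ContinuousAt (fun y => R ^ 2 - ‖y - z‖ ^ 2) x := by fun_prop
  have hgrad : ContinuousAt (fun y => ‖fderiv ℝ u y‖) x :=
    ((hu x hx).fderiv_right (m := 0) (by simp)).continuousAt.norm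
  have hweight : ContinuousAt (fun y => bernsteinWeight N (u y)) x :=
    ContinuousAt.comp (g := bernsteinWeight N)
      (contDiff_bernsteinWeight N).continuous.continuousAt (hu x hx).continuousAt
  exact ((hcut.mul hgrad).div hweight (bernsteinWeight_pos hN (hb x hx)).ne').continuousWithinAt

theorem isLocalMax_bernsteinFun (hN : 0 < N) (hb : ∀ y ∈ closedBall z R, |u y| ≤ N)
    (hx : x ∈ ball z R) (he : ‖e‖ = 1) (hxe : fderiv ℝ u x e = ‖fderiv ℝ u x‖)
    (hG : (R ^ 2 - ‖x - z‖ ^ 2) * ‖fderiv ℝ u x‖ = G * bernsteinWeight N (u x))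
    (hmax : ∀ y ∈ closedBall z R, bernsteinQuotient u z R N y ≤ G) :
    IsLocalMax (bernsteinFun u z e R N G) x := by
  filter_upwards [isOpen_ball.mem_nhds hx] with y hy
  have hyc := ball_subset_closedBall hy
  have hcut : 0 ≤ R ^ 2 - ‖y - z‖ ^ 2 :=
    sub_nonneg.2 (pow_le_pow_left₀ (norm_nonneg _) (mem_closedBall_iff_norm.1 hyc) 2)
  have hdir : fderiv ℝ u y e ≤ ‖fderiv ℝ u y‖ := by
    simpa [he] using (le_abs_self _).trans ((fderiv ℝ u y).le_opNorm e)
  have hle := (div_le_iff₀ (bernsteinWeight_pos hN (hb y hyc))).1 (hmax y hyc)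
  have := mul_le_mul_of_nonneg_left hdir hcut
  rw [bernsteinFun, bernsteinFun, hxe]
  linarith

end InnerProductSpace

variable {n k : ℕ} {u : Euc n → ℝ} {x z e : Euc n} {R N G p : ℝ}

theorem posSemidef_of_isLocalMax_bernsteinFun (hu : ContDiffAt ℝ 3 u x) (he : ‖e‖ = 1)
    (hgrad : ∀ v, fderiv ℝ u x v = p * inner ℝ e v)
    (hmax : IsLocalMax (bernsteinFun u z e R N G) x) (hp : 0 ≤ p) (hx : ‖x - z‖ ≤ R)
    (hux : |u x| ≤ N) (hG : 0 ≤ G) :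
    (-(2 * (R ^ 2 - ‖x - z‖ ^ 2) * G * (u x + 2 * N)) • hessMat n u x -
      (2 * (R ^ 2 - ‖x - z‖ ^ 2) * G * p ^ 2) • vecMulVec e.ofLp e.ofLp +
      (p * (10 * R ^ 2 + 24 * N * R * G)) • (1 : Matrix (Fin n) (Fin n) ℝ) -
      (R ^ 2 - ‖x - z‖ ^ 2) ^ 2 • hessMat n (fun y => fderiv ℝ u y e) x).PosSemidef := by
  refine .of_dotProduct_mulVec_nonneg ?_ fun v => ?_
  · have huSymm := isSymm_hessMat (hu.of_le (by norm_num) : ContDiffAt ℝ 2 u x)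
    have heSymm : (vecMulVec e.ofLp e.ofLp).IsSymm := transpose_vecMulVec _ _
    rw [isHermitian_iff_isSymm]
    exact (((huSymm.smul _).sub (heSymm.smul _)).add (isSymm_one.smul _)).sub
      ((isSymm_hessMat (contDiffAt_fderiv_apply hu e)).smul _)
  · have hle := sq_mul_fderiv_fderiv_fderiv_le_of_isLocalMax_bernsteinFun hu he hgrad hmax hp hx
      hux hG (WithLp.toLp 2 v)
    rw [← dotProduct_hessMat_mulVec, ← dotProduct_hessMat_mulVec, ← dotProduct_ofLp,
      ← real_inner_self_eq_norm_sq (WithLp.toLp 2 v), ← dotProduct_ofLp] at hle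
    simp only [star_trivial, sub_mulVec, add_mulVec, smul_mulVec, neg_mulVec, neg_smul, one_mulVec,
      vecMulVec_mulVec, dotProduct_sub, dotProduct_add, dotProduct_smul, dotProduct_neg,
      smul_eq_mul, op_smul_eq_smul] at hle ⊢
    rw [dotProduct_comm v e.ofLp]
    linarith

theorem mul_lt_two_mul_sq {R N G n : ℝ} (hR : 0 < R) (hn : 1 ≤ n) (hNG : 3 * n * R ≤ N * G) :
    n * (10 * R ^ 2 + 24 * N * R * G) < 2 * G ^ 2 * (7 * N ^ 2) := by
  have hnR : R ≤ n * R := le_mul_of_one_le_left hR.le hn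
  have hsq : n * R * R ≤ N * G / 3 * (N * G / 3) :=
    mul_le_mul (by linarith) (by linarith) hR.le (by linarith)
  have hcross : n * R * (N * G) ≤ N * G / 3 * (N * G) :=
    mul_le_mul_of_nonneg_right (by linarith) (by linarith)
  have hpos : 0 < N * G * (N * G) := mul_pos (by nlinarith) (by nlinarith)
  linarith

theorem lt_of_isLocalMax_bernsteinFun (hk0 : k ≠ 0) (hkn : k ≤ n) (hu : ContDiffAt ℝ 3 u x)
    (hM : GardingMatrix n k (hessMat n u x)) {c : ℝ}
    (hS : ∀ᶠ y in 𝓝 x, matSk n k (hessMat n u y) = c) (he : ‖e‖ = 1)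
    (hgrad : ∀ v, fderiv ℝ u x v = p * inner ℝ e v)
    (hmax : IsLocalMax (bernsteinFun u z e R N G) x) (hp : 0 < p) (hx : ‖x - z‖ < R)
    (hux : |u x| ≤ N) (hG : 0 < G)
    (hpG : (R ^ 2 - ‖x - z‖ ^ 2) * p = G * bernsteinWeight N (u x)) :
    N * G < 3 * n * R := by
  obtain ⟨m, rfl⟩ := Nat.exists_eq_succ_of_ne_zero hk0
  by_contra! hNG
  have hn : (1 : ℝ) ≤ n := by exact_mod_cast (Nat.succ_pos m).trans_le hkn
  have hR : 0 < R := (norm_nonneg _).trans_lt hx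
  have hN : 0 ≤ N := (abs_nonneg _).trans hux
  have hcut : 0 ≤ R ^ 2 - ‖x - z‖ ^ 2 := sub_nonneg.2 (pow_le_pow_left₀ (norm_nonneg _) hx.le 2)
  have hnonpos := fderiv_fderiv_nonpos_of_isLocalMax_bernsteinFun hu he hgrad hmax hp.le hx hux
    hG.le (by nlinarith)
  have hle := hM.le_mul_of_fderiv_matSk_eq_zero hkn (e := e.ofLp)
    (by rw [dotProduct_ofLp, real_inner_self_eq_norm_sq, he, one_pow])
    (by rwa [dotProduct_hessMat_mulVec])
    (by rw [map_smul, fderiv_matSk_hessMat_fderiv_apply hkn hu hS, smul_zero])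
    (neg_nonpos.2 (mul_nonneg (by positivity) (by linarith [neg_le_of_abs_le hux])))
    (by positivity) (by positivity)
    (posSemidef_of_isLocalMax_bernsteinFun hu he hgrad hmax hp.le hx.le hux hG.le)
  have hweight := mul_le_mul_of_nonneg_left (seven_mul_sq_le_bernsteinWeight hux)
    (by positivity : 0 ≤ 2 * G ^ 2)
  refine hle.not_gt ?_
  calc n * (p * (10 * R ^ 2 + 24 * N * R * G)) = p * (n * (10 * R ^ 2 + 24 * N * R * G)) := by ring
    _ < p * (2 * G ^ 2 * bernsteinWeight N (u x)) :=
        mul_lt_mul_of_pos_left ((mul_lt_two_mul_sq hR hn hNG).trans_le hweight) hp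
    _ = 2 * G * p * (G * bernsteinWeight N (u x)) := by ring
    _ = 2 * (R ^ 2 - ‖x - z‖ ^ 2) * G * p ^ 2 := by rw [← hpG]; ring

theorem mul_bernsteinQuotient_le_of_isMaxOn (hk0 : k ≠ 0) (hkn : k ≤ n) (hR : 0 < R) (hN : 0 < N)
    {x : Euc n} (hx : x ∈ closedBall z R) (hu : ContDiffAt ℝ 3 u x)
    (hM : ∀ y ∈ ball z R, GardingMatrix n k (hessMat n u y)) {c : ℝ}
    (hS : ∀ y ∈ ball z R, matSk n k (hessMat n u y) = c)
    (hb : ∀ y ∈ closedBall z R, |u y| ≤ N)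
    (hmax : IsMaxOn (bernsteinQuotient u z R N) (closedBall z R) x) :
    N * bernsteinQuotient u z R N x ≤ 3 * n * R := by
  rcases le_or_gt (bernsteinQuotient u z R N x) 0 with hG | hG
  · exact (mul_nonpos_of_nonneg_of_nonpos hN.le hG).trans (by positivity)
  have hweight := bernsteinWeight_pos hN (hb x hx)
  have hpG : (R ^ 2 - ‖x - z‖ ^ 2) * ‖fderiv ℝ u x‖ =
      bernsteinQuotient u z R N x * bernsteinWeight N (u x) :=
    (div_mul_cancel₀ _ hweight.ne').symm
  have hne : (R ^ 2 - ‖x - z‖ ^ 2) * ‖fderiv ℝ u x‖ ≠ 0 := hpG ▸ (mul_pos hG hweight).ne'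
  have hgrad_ne : ‖fderiv ℝ u x‖ ≠ 0 := right_ne_zero_of_mul hne
  have hxR : x ∈ ball z R := by
    refine mem_ball_iff_norm.2 ((mem_closedBall_iff_norm.1 hx).lt_of_ne fun h => ?_)
    exact left_ne_zero_of_mul hne (by rw [h, sub_self])
  obtain ⟨e, he, hgrad⟩ :=
    exists_norm_eq_one_forall_eq_norm_mul_inner (norm_ne_zero_iff.1 hgrad_ne)
  have hloc : IsLocalMax (bernsteinFun u z e R N (bernsteinQuotient u z R N x)) x :=
    isLocalMax_bernsteinFun hN hb hxR he
      (by rw [hgrad, real_inner_self_eq_norm_sq, he, one_pow, mul_one]) hpG hmax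
  exact (lt_of_isLocalMax_bernsteinFun hk0 hkn hu (hM x hxR)
    (mem_of_superset (isOpen_ball.mem_nhds hxR) hS) he hgrad hloc
    ((norm_nonneg _).lt_of_ne' hgrad_ne) (mem_ball_iff_norm.1 hxR) (hb x hx) hG hpG).le

theorem norm_fderiv_le_of_matSk_hessMat_eq (hk0 : k ≠ 0) (hkn : k ≤ n) (hR : 0 < R) (hN : 0 < N)
    (hu : ∀ x ∈ closedBall z R, ContDiffAt ℝ 3 u x)
    (hM : ∀ x ∈ ball z R, GardingMatrix n k (hessMat n u x)) {c : ℝ}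
    (hS : ∀ x ∈ ball z R, matSk n k (hessMat n u x) = c)
    (hb : ∀ x ∈ closedBall z R, |u x| ≤ N) : ‖fderiv ℝ u z‖ ≤ 45 * n * N / R := by
  have hz : z ∈ closedBall z R := mem_closedBall_self hR.le
  obtain ⟨x, hx, hmax⟩ := (isCompact_closedBall z R).exists_isMaxOn ⟨z, hz⟩
    (continuousOn_bernsteinQuotient hN (fun y hy => (hu y hy).of_le (by norm_num)) hb)
  set G := bernsteinQuotient u z R N x
  have hNG : N * G ≤ 3 * n * R :=
    mul_bernsteinQuotient_le_of_isMaxOn hk0 hkn hR hN hx (hu x hx) hM hS hb hmax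
  have hG0 : 0 ≤ G := div_nonneg (mul_nonneg
    (sub_nonneg.2 (pow_le_pow_left₀ (norm_nonneg _) (mem_closedBall_iff_norm.1 hx) 2))
    (norm_nonneg _)) (bernsteinWeight_pos hN (hb x hx)).le
  have hGz : R ^ 2 * ‖fderiv ℝ u z‖ ≤ G * (15 * N ^ 2) := by
    have hle := (div_le_iff₀ (bernsteinWeight_pos hN (hb z hz))).1 (hmax hz)
    rw [sub_self, norm_zero, zero_pow two_ne_zero, sub_zero] at hle
    exact hle.trans (mul_le_mul_of_nonneg_left (bernsteinWeight_le_fifteen_mul_sq (hb z hz)) hG0)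
  rw [le_div_iff₀ hR]
  refine le_of_mul_le_mul_left ?_ hR
  calc R * (‖fderiv ℝ u z‖ * R) = R ^ 2 * ‖fderiv ℝ u z‖ := by ring
    _ ≤ 15 * N * (N * G) := by linarith
    _ ≤ 15 * N * (3 * n * R) := by gcongr
    _ = R * (45 * n * N) := by ring

end GradientEstimate

section HolderSeminorm

theorem tendsto_sSup_zero {ι : Type*} {l : Filter ι} {S : ι → Set ℝ} {b : ι → ℝ}
    (hS : ∀ i, ∀ s ∈ S i, 0 ≤ s) (hSb : ∀ᶠ i in l, ∀ s ∈ S i, s ≤ b i)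
    (hb : Tendsto b l (𝓝 0)) : Tendsto (fun i => sSup (S i)) l (𝓝 0) := by
  refine squeeze_zero' (Eventually.of_forall fun i => Real.sSup_nonneg (hS i)) ?_
    (by simpa using hb.abs)
  filter_upwards [hSb] with i hi
  exact Real.sSup_le (fun s hs => (hi s hs).trans (le_abs_self _)) (abs_nonneg _)

theorem le_rpow_mul_rpow_of_le {D H G γ : ℝ} (hD : 0 ≤ D) (hH : D ≤ H) (hG : D ≤ G)
    (hγ : 0 ≤ γ) (hγ1 : γ ≤ 1) : D ≤ H ^ (1 - γ) * G ^ γ := by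
  have hγ' : 0 ≤ 1 - γ := sub_nonneg.2 hγ1
  calc D = D ^ (1 - γ) * D ^ γ := by
        rw [← Real.rpow_add_of_nonneg hD hγ' hγ, sub_add_cancel, Real.rpow_one]
    _ ≤ H ^ (1 - γ) * G ^ γ :=
        mul_le_mul (Real.rpow_le_rpow hD hH hγ') (Real.rpow_le_rpow hD hG hγ)
          (Real.rpow_nonneg hD γ) (Real.rpow_nonneg (hD.trans hH) _)

theorem div_rpow_le_of_lipschitz_of_le {D d L H γ ρ : ℝ} (hD : 0 ≤ D) (hd : 0 < d) (hL : 0 ≤ L)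
    (hH : D ≤ H) (hγ : 0 ≤ γ) (hγ1 : γ ≤ 1) (hρ : 0 < ρ) (hlip : d < ρ → D ≤ L * d) :
    D / d ^ γ ≤ H ^ (1 - γ) * L ^ γ + H / ρ ^ γ := by
  have hH0 : 0 ≤ H := hD.trans hH
  rcases lt_or_ge d ρ with hdρ | hdρ
  · refine le_add_of_le_of_nonneg ?_ (by positivity)
    rw [div_le_iff₀ (by positivity), mul_assoc, ← Real.mul_rpow hL hd.le]
    exact le_rpow_mul_rpow_of_le hD hH (hlip hdρ) hγ hγ1
  · exact le_add_of_nonneg_of_le (by positivity)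
      (div_le_div₀ hH0 hH (by positivity) (Real.rpow_le_rpow hρ.le hdρ hγ))

theorem tendsto_sSup_holder_of_lipschitz {ι E : Type*} [NormedAddCommGroup E] {l : Filter ι}
    {w : ι → E → ℝ} {K : Set E} {η : ι → ℝ} {L ρ γ : ℝ} (hγ : 0 ≤ γ) (hγ1 : γ < 1) (hL : 0 ≤ L)
    (hρ : 0 < ρ) (hη : Tendsto η l (𝓝 0)) (hw : ∀ᶠ i in l, ∀ x ∈ K, |w i x| ≤ η i)
    (hlip : ∀ᶠ i in l, ∀ x ∈ K, ∀ y ∈ K, ‖x - y‖ < ρ → |w i x - w i y| ≤ L * ‖x - y‖) :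
    Tendsto (fun i => sSup {d | ∃ x ∈ K, ∃ y ∈ K, x ≠ y ∧ d = |w i x - w i y| / ‖x - y‖ ^ γ})
      l (𝓝 0) := by
  have hlim : Tendsto (fun i => (2 * η i) ^ (1 - γ) * L ^ γ + 2 * η i / ρ ^ γ) l (𝓝 0) := by
    have h2η := hη.const_mul 2
    have hadd := ((h2η.rpow_const (p := 1 - γ) (Or.inr (by linarith))).mul_const (L ^ γ)).add
      (h2η.div_const (ρ ^ γ))
    rwa [mul_zero, Real.zero_rpow (by linarith), zero_mul, zero_div, add_zero] at hadd
  refine tendsto_sSup_zero ?_ ?_ hlim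
  · rintro i _ ⟨x, -, y, -, -, rfl⟩
    positivity
  · filter_upwards [hw, hlip] with i hi hlipi
    rintro _ ⟨x, hx, y, hy, hxy, rfl⟩
    have hdiff : |w i x - w i y| ≤ 2 * η i := by
      linarith [abs_sub (w i x) (w i y), hi x hx, hi y hy]
    exact div_rpow_le_of_lipschitz_of_le (abs_nonneg _) (norm_pos_iff.2 (sub_ne_zero.2 hxy)) hL
      hdiff hγ hγ1.le hρ (hlipi x hx y hy)

end HolderSeminorm

section Convergence

open Matrix Metric

/-- The value at distance `r` from `x₀` of the profile `arsinh ‖x - x₀‖⁻¹`, normalised to be `1` on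
`∂B_ε(x₀)`. It measures how far `u^ε` may be from its limit. -/
noncomputable def arsinhRatio (ε r : ℝ) : ℝ := Real.arsinh r⁻¹ / Real.arsinh ε⁻¹

theorem arsinhRatio_nonneg {ε r : ℝ} (hε : 0 ≤ ε) (hr : 0 ≤ r) : 0 ≤ arsinhRatio ε r :=
  div_nonneg (Real.arsinh_nonneg_iff.2 (inv_nonneg.2 hr))
    (Real.arsinh_nonneg_iff.2 (inv_nonneg.2 hε))

theorem arsinhRatio_le_arsinhRatio {ε r s : ℝ} (hε : 0 ≤ ε) (hr : 0 < r) (hrs : r ≤ s) :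
    arsinhRatio ε s ≤ arsinhRatio ε r :=
  div_le_div_of_nonneg_right (Real.arsinh_le_arsinh.2 (inv_anti₀ hr hrs))
    (Real.arsinh_nonneg_iff.2 (inv_nonneg.2 hε))

theorem arsinhRatio_le_one {ε r : ℝ} (hε : 0 < ε) (hr : ε ≤ r) : arsinhRatio ε r ≤ 1 :=
  (arsinhRatio_le_arsinhRatio hε.le hε hr).trans
    (div_self (Real.arsinh_pos_iff.2 (inv_pos.2 hε)).ne').le

theorem tendsto_div_arsinh_inv (C : ℝ) :
    Tendsto (fun ε => C / Real.arsinh ε⁻¹) (𝓝[>] (0 : ℝ)) (𝓝 0) :=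
  (Real.sinhOrderIso.symm.tendsto_atTop.comp tendsto_inv_nhdsGT_zero).const_div_atTop C

theorem tendsto_arsinhRatio (r : ℝ) :
    Tendsto (fun ε => arsinhRatio ε r) (𝓝[>] (0 : ℝ)) (𝓝 0) :=
  tendsto_div_arsinh_inv _

theorem tendsto_const_mul_arsinhRatio (C r : ℝ) :
    Tendsto (fun ε => C * arsinhRatio ε r) (𝓝[>] (0 : ℝ)) (𝓝 0) := by
  simpa using (tendsto_arsinhRatio r).const_mul C

/-- `v ε` is close to `ψ` off the hole `B_ε(x₀)` for all small `ε > 0`, with an error governed by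
the profile `arsinh ‖x - x₀‖⁻¹`. -/
def ArsinhRateBound {E : Type*} [SeminormedAddCommGroup E] (x₀ : E) (C : ℝ) (v : ℝ → E → ℝ)
    (ψ : E → ℝ) : Prop :=
  ∀ᶠ ε in 𝓝[>] (0 : ℝ), ∀ x ∈ (ball x₀ ε)ᶜ, |v ε x - ψ x| ≤ C * arsinhRatio ε ‖x - x₀‖

theorem eventually_notMem_ball_nhdsGT_zero {E : Type*} [MetricSpace E] {x x₀ : E} (hx : x ≠ x₀) :
    ∀ᶠ ε in 𝓝[>] (0 : ℝ), x ∉ ball x₀ ε := by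
  filter_upwards [Ioo_mem_nhdsGT (dist_pos.2 hx)] with ε hε
  simpa using hε.2.le

section ArsinhRateBound

variable {E : Type*} [NormedAddCommGroup E] {x₀ : E} {C : ℝ} {v : ℝ → E → ℝ} {ψ : E → ℝ}

theorem ArsinhRateBound.eventually_abs_sub_le (h : ArsinhRateBound x₀ C v ψ) (hC : 0 ≤ C) :
    ∀ᶠ ε in 𝓝[>] (0 : ℝ), ∀ x ∈ (ball x₀ ε)ᶜ, |v ε x - ψ x| ≤ C := by
  filter_upwards [h, self_mem_nhdsWithin] with ε hest hε x hx
  have hεx : ε ≤ ‖x - x₀‖ := by simpa [dist_eq_norm] using hx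
  exact (hest x hx).trans (mul_le_of_le_one_right hC (arsinhRatio_le_one hε hεx))

theorem ArsinhRateBound.eventually_abs_sub_le_of_le_norm (h : ArsinhRateBound x₀ C v ψ)
    (hC : 0 ≤ C) {r : ℝ} (hr : 0 < r) :
    ∀ᶠ ε in 𝓝[>] (0 : ℝ), ∀ x, r ≤ ‖x - x₀‖ → |v ε x - ψ x| ≤ C * arsinhRatio ε r := by
  filter_upwards [h, Ioo_mem_nhdsGT hr] with ε hest hε x hx
  have hxball : x ∈ (ball x₀ ε)ᶜ := by simpa [dist_eq_norm] using hε.2.le.trans hx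
  exact (hest x hxball).trans
    (mul_le_mul_of_nonneg_left (arsinhRatio_le_arsinhRatio hε.1.le hr hx) hC)

theorem ArsinhRateBound.tendsto_of_ne (h : ArsinhRateBound x₀ C v ψ) {x : E} (hx : x ≠ x₀) :
    Tendsto (fun ε => |v ε x - ψ x|) (𝓝[>] (0 : ℝ)) (𝓝 0) := by
  refine squeeze_zero' (Eventually.of_forall fun _ => abs_nonneg _) ?_
    (tendsto_const_mul_arsinhRatio C ‖x - x₀‖)
  filter_upwards [h, eventually_notMem_ball_nhdsGT_zero hx] with ε hest hε using hest x hε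

end ArsinhRateBound

section ZeroExtension

variable {n : ℕ} {Ω : Set (Euc n)} {b : ℝ} {v : Euc n → ℝ} {x : Euc n}

theorem extBy_of_mem (hx : x ∈ Ω) : extBy n Ω b v x = b := if_pos hx

theorem extBy_of_notMem (hx : x ∉ Ω) : extBy n Ω b v x = v x := if_neg hx

theorem eventually_extBy_ball_eq {v : ℝ → Euc n → ℝ} {x₀ : Euc n} {K : Set (Euc n)} {r : ℝ}
    (hr : 0 < r) (hKr : ∀ x ∈ K, r ≤ ‖x - x₀‖) :
    ∀ᶠ ε in 𝓝[>] (0 : ℝ), ∀ x ∈ K, extBy n (ball x₀ ε) b (v ε) x = v ε x := by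
  filter_upwards [Ioo_mem_nhdsGT hr] with ε hε x hx
  exact extBy_of_notMem fun hxε => ((hKr x hx).trans_lt (mem_ball_iff_norm.1 hxε)).not_ge hε.2.le

theorem measurable_extBy (hΩ : MeasurableSet Ω) (hv : ContinuousOn v Ωᶜ) :
    Measurable (extBy n Ω b v) :=
  ContinuousOn.measurable_piecewise continuousOn_const hv hΩ

end ZeroExtension

theorem ArsinhRateBound.tendsto_setIntegral_extBy {n : ℕ} [Nontrivial (Euc n)] {x₀ : Euc n}
    {C b : ℝ} {v : ℝ → Euc n → ℝ} {ψ : Euc n → ℝ} (h : ArsinhRateBound x₀ C v ψ) (hC : 0 ≤ C)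
    (hv : ∀ᶠ ε in 𝓝[>] (0 : ℝ), ContinuousOn (v ε) (ball x₀ ε)ᶜ) (hψ : Continuous ψ)
    {K : Set (Euc n)} (hK : IsCompact K) :
    Tendsto (fun ε => ∫ x in K, |extBy n (ball x₀ ε) b (v ε) x - ψ x|) (𝓝[>] (0 : ℝ)) (𝓝 0) := by
  obtain ⟨Q, hQ⟩ := hK.exists_bound_of_continuousOn hψ.continuousOn
  suffices Tendsto (fun ε => ∫ x in K, |extBy n (ball x₀ ε) b (v ε) x - ψ x|) (𝓝[>] (0 : ℝ))
      (𝓝 (∫ _ in K, 0)) by simpa only [integral_zero] using this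
  refine tendsto_integral_filter_of_dominated_convergence (fun _ => max C (|b| + Q)) ?_ ?_
    (integrableOn_const hK.measure_lt_top.ne) ?_
  · filter_upwards [hv] with ε hvε
    exact ((measurable_extBy measurableSet_ball hvε).sub
      hψ.measurable).norm.aestronglyMeasurable
  · filter_upwards [h.eventually_abs_sub_le hC] with ε hest
    filter_upwards [ae_restrict_mem hK.measurableSet] with x hx
    rw [Real.norm_eq_abs, abs_abs]
    by_cases hxball : x ∈ ball x₀ ε
    · rw [extBy_of_mem hxball]
      exact (abs_sub _ _).trans ((add_le_add_right (hQ x hx) _).trans (le_max_right _ _))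
    · rw [extBy_of_notMem hxball]
      exact (hest x hxball).trans (le_max_left _ _)
  · refine ae_restrict_of_ae ((ae_iff.2 (by simp) : ∀ᵐ x, x ≠ x₀).mono fun x hx => ?_)
    refine (h.tendsto_of_ne hx).congr' ?_
    filter_upwards [eventually_notMem_ball_nhdsGT_zero hx] with ε hε
    rw [extBy_of_notMem hε]

variable {n k : ℕ} {a : Fin n → ℝ} {x₀ : Euc n} {c C : ℝ}

theorem exists_forall_le_norm_sub {E : Type*} [NormedAddCommGroup E] {K : Set E} {x₀ : E}
    (hK : IsClosed K) (hx₀ : x₀ ∉ K) : ∃ r : ℝ, 0 < r ∧ ∀ x ∈ K, r ≤ ‖x - x₀‖ := by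
  obtain ⟨r, hr, hball⟩ := Metric.mem_nhds_iff.1 (hK.isOpen_compl.mem_nhds hx₀)
  refine ⟨r, hr, fun x hx => le_of_not_gt fun hlt => hball (mem_ball_iff_norm.2 hlt) hx⟩

namespace ExtBallSol

variable {ε : ℝ} {u : Euc n → ℝ}

theorem abs_sub_paraboloid_le (h : ExtBallSol n k a x₀ ε c u) (hn : 3 ≤ n) (hk0 : k ≠ 0)
    (hkn : 2 * k ≤ n) (hA : matSk n k (diagonal a) = 1) (hε : 0 < ε) (hC : 0 < C)
    (ha : ∀ i, C / Real.arsinh ε⁻¹ ≤ a i) (hc : 0 ≤ c)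
    (hbdry : ∀ y ∈ sphere x₀ ε, quadA n (diagonal a) y + c ≤ C) {x : Euc n}
    (hx : x ∈ (ball x₀ ε)ᶜ) :
    |u x - (quadA n (diagonal a) x + c)| ≤ C * arsinhRatio ε ‖x - x₀‖ := by
  have harsinh : 0 < Real.arsinh ε⁻¹ := Real.arsinh_pos_iff.2 (inv_pos.2 hε)
  have hM : 0 < C / Real.arsinh ε⁻¹ := div_pos hC harsinh
  have hupper := h.le_paraboloid hk0 (by lia) (fun i => hM.le.trans (ha i)) hA hc hx
  have hlower := h.barrier_le hn hk0 hkn hA hε hM ha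
    (fun y hy => (hbdry y hy).trans_eq (div_mul_cancel₀ C harsinh.ne').symm) hx
  have hratio : 0 ≤ C * arsinhRatio ε ‖x - x₀‖ :=
    mul_nonneg hC.le (arsinhRatio_nonneg hε.le (norm_nonneg _))
  rw [barrier_eq, div_mul_eq_mul_div, mul_div_assoc] at hlower
  rw [arsinhRatio] at hratio ⊢
  exact abs_le.2 ⟨by linarith, by linarith⟩

theorem norm_fderiv_le (h : ExtBallSol n k a x₀ ε c u) (hk0 : k ≠ 0) (hkn : k ≤ n) {x : Euc n}
    {R N : ℝ} (hR : 0 < R) (hN : 0 < N) (hx : ε + R ≤ dist x x₀)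
    (hb : ∀ y ∈ closedBall x R, |u y| ≤ N) : ‖fderiv ℝ u x‖ ≤ 45 * n * N / R := by
  have hclosed : Disjoint (closedBall x R) (ball x₀ ε) :=
    closedBall_disjoint_ball (by linarith)
  have hopen : Disjoint (ball x R) (closedBall x₀ ε) := ball_disjoint_closedBall (by linarith)
  exact norm_fderiv_le_of_matSk_hessMat_eq hk0 hkn hR hN
    (fun y hy => h.contDiffAt (m := 3) (Set.disjoint_left.1 hclosed hy))
    (fun y hy => h.gardingMatrix_hessMat (Set.disjoint_left.1 hopen hy))
    (fun y hy => h.matSk_hessMat_eq_one (Set.disjoint_left.1 hopen hy)) hb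

theorem abs_sub_sub_sub_le (h : ExtBallSol n k a x₀ ε c u) (hk0 : k ≠ 0) (hkn : k ≤ n)
    {ψ : Euc n → ℝ} (hψ : Differentiable ℝ ψ) {x y : Euc n} {R N B : ℝ} (hR : 0 < R) (hN : 0 < N)
    (hx : ε + 2 * R ≤ dist x x₀) (hb : ∀ q ∈ closedBall x (2 * R), |u q| ≤ N)
    (hB : ∀ q ∈ ball x R, ‖fderiv ℝ ψ q‖ ≤ B) (hy : y ∈ ball x R) :
    |(u x - ψ x) - (u y - ψ y)| ≤ (45 * n * N / R + B) * ‖x - y‖ := by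
  have hfar : ∀ q ∈ ball x R, ε + R ≤ dist q x₀ := fun q hq => by
    linarith [dist_triangle_left x x₀ q, mem_ball.1 hq]
  have hdiff : ∀ q ∈ ball x R, DifferentiableAt ℝ u q := fun q hq =>
    (h.contDiffAt (m := 1) fun hq' => by linarith [hfar q hq, mem_ball.1 hq']).differentiableAt
      (by simp)
  refine (convex_ball x R).norm_image_sub_le_of_norm_fderiv_le (f := fun q => u q - ψ q)
    (fun q hq => (hdiff q hq).sub (hψ q)) (fun q hq => ?_) hy (mem_ball_self hR)
  rw [fderiv_fun_sub (hdiff q hq) (hψ q)]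
  refine (norm_sub_le _ _).trans (add_le_add ?_ (hB q hq))
  refine h.norm_fderiv_le hk0 hkn hR hN (hfar q hq) fun p hp => hb p ?_
  exact mem_closedBall.2 (by linarith [dist_triangle p q x, mem_closedBall.1 hp, mem_ball.1 hq])

end ExtBallSol

variable {u : ℝ → Euc n → ℝ}

theorem exists_arsinhRateBound (hn : 3 ≤ n) (hk0 : k ≠ 0) (hkn : 2 * k ≤ n)
    (ha : ∀ i, 0 < a i) (hA : matSk n k (diagonal a) = 1) (hc : 0 ≤ c)
    (hu : ∀ᶠ ε in 𝓝[>] (0 : ℝ), ExtBallSol n k a x₀ ε c (u ε)) :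
    ∃ C, 0 < C ∧ ArsinhRateBound x₀ C u (fun x => quadA n (diagonal a) x + c) := by
  obtain ⟨Q, hQ⟩ := (isCompact_closedBall x₀ 1).exists_bound_of_continuousOn
    (contDiff_quadA (m := 0) (diagonal a)).continuous.continuousOn
  have hQ0 : 0 ≤ Q := (norm_nonneg _).trans (hQ x₀ (mem_closedBall_self zero_le_one))
  refine ⟨Q + c + 1, by positivity, ?_⟩
  have hsmall : ∀ᶠ ε in 𝓝[>] (0 : ℝ), ∀ i, (Q + c + 1) / Real.arsinh ε⁻¹ ≤ a i :=
    eventually_all.2 fun i =>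
      (tendsto_div_arsinh_inv _).eventually (eventually_le_nhds (ha i))
  filter_upwards [hu, hsmall, Ioo_mem_nhdsGT one_pos] with ε h haε hε x hx
  refine h.abs_sub_paraboloid_le hn hk0 hkn hA hε.1 (by positivity) haε hc (fun y hy => ?_) hx
  have hy1 : y ∈ closedBall x₀ 1 := closedBall_subset_closedBall hε.2.le
    (sphere_subset_closedBall hy)
  linarith [(le_abs_self _).trans (hQ y hy1)]

theorem ArsinhRateBound.exists_eventually_lipschitz {ψ : Euc n → ℝ}
    (hrate : ArsinhRateBound x₀ C u ψ) (hC : 0 < C)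
    (hu : ∀ᶠ ε in 𝓝[>] (0 : ℝ), ExtBallSol n k a x₀ ε c (u ε)) (hk0 : k ≠ 0) (hkn : k ≤ n)
    (hψ : ContDiff ℝ 1 ψ) {K : Set (Euc n)} (hK : IsCompact K) {R : ℝ} (hR : 0 < R)
    (hKR : ∀ x ∈ K, 3 * R ≤ ‖x - x₀‖) :
    ∃ L, 0 ≤ L ∧ ∀ᶠ ε in 𝓝[>] (0 : ℝ), ∀ x ∈ K, ∀ y ∈ K, ‖x - y‖ < R →
      |(u ε x - ψ x) - (u ε y - ψ y)| ≤ L * ‖x - y‖ := by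
  have hK' : IsCompact (cthickening (2 * R) K) := hK.cthickening
  obtain ⟨Q, hQ⟩ := hK'.exists_bound_of_continuousOn hψ.continuous.continuousOn
  obtain ⟨B, hB⟩ := hK'.exists_bound_of_continuousOn
    (hψ.continuous_fderiv one_ne_zero).continuousOn
  refine ⟨45 * n * (C + |Q|) / R + |B|, by positivity, ?_⟩
  filter_upwards [hu, hrate.eventually_abs_sub_le hC.le, Ioo_mem_nhdsGT hR]
    with ε h hest hε x hx y _ hxy
  have hdist : 3 * R ≤ dist x x₀ := by simpa [dist_eq_norm] using hKR x hx
  have hmem : ∀ q, dist q x ≤ 2 * R → q ∈ cthickening (2 * R) K := fun q hq =>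
    mem_cthickening_of_dist_le q x _ K hx hq
  refine h.abs_sub_sub_sub_le hk0 hkn (hψ.differentiable one_ne_zero) hR (by positivity)
    (by linarith [hε.2]) (fun q hq => ?_) (fun q hq => ?_) (mem_ball_iff_norm'.2 hxy)
  · have hqball : q ∈ (ball x₀ ε)ᶜ := fun hq' => by
      linarith [dist_triangle_left x x₀ q, mem_closedBall.1 hq, mem_ball.1 hq', hε.2]
    calc |u ε q| ≤ |u ε q - ψ q| + |ψ q| := by simpa using abs_add_le (u ε q - ψ q) (ψ q)
      _ ≤ C + |Q| := add_le_add (hest q hqball) ((hQ q (hmem q hq)).trans (le_abs_self Q))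
  · exact (hB q (hmem q (by linarith [mem_ball.1 hq]))).trans (le_abs_self B)

theorem ArsinhRateBound.eventually_abs_extBy_sub_le {v : ℝ → Euc n → ℝ} {ψ : Euc n → ℝ} {b : ℝ}
    (hrate : ArsinhRateBound x₀ C v ψ) (hC : 0 ≤ C) {K : Set (Euc n)} {r : ℝ} (hr : 0 < r)
    (hKr : ∀ x ∈ K, r ≤ ‖x - x₀‖) :
    ∀ᶠ ε in 𝓝[>] (0 : ℝ), ∀ x ∈ K,
      |extBy n (ball x₀ ε) b (v ε) x - ψ x| ≤ C * arsinhRatio ε r := by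
  filter_upwards [eventually_extBy_ball_eq hr hKr, hrate.eventually_abs_sub_le_of_le_norm hC hr]
    with ε hext hest x hx
  rw [hext x hx]
  exact hest x (hKr x hx)

theorem ArsinhRateBound.tendsto_sSup_extBy {v : ℝ → Euc n → ℝ} {ψ : Euc n → ℝ} {b : ℝ}
    (hrate : ArsinhRateBound x₀ C v ψ) (hC : 0 ≤ C) {K : Set (Euc n)} (hK : IsClosed K)
    (hx₀ : x₀ ∉ K) :
    Tendsto (fun ε => sSup ((fun x => |extBy n (ball x₀ ε) b (v ε) x - ψ x|) '' K))
      (𝓝[>] (0 : ℝ)) (𝓝 0) := by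
  obtain ⟨r, hr, hKr⟩ := exists_forall_le_norm_sub hK hx₀
  refine tendsto_sSup_zero (fun ε => Set.forall_mem_image.2 fun _ _ => abs_nonneg _)
    ?_ (tendsto_const_mul_arsinhRatio C r)
  filter_upwards [hrate.eventually_abs_extBy_sub_le hC hr hKr] with ε hest
  exact Set.forall_mem_image.2 hest

theorem ArsinhRateBound.tendsto_sSup_holder_extBy {ψ : Euc n → ℝ} {b : ℝ}
    (hrate : ArsinhRateBound x₀ C u ψ) (hC : 0 < C)
    (hu : ∀ᶠ ε in 𝓝[>] (0 : ℝ), ExtBallSol n k a x₀ ε c (u ε)) (hk0 : k ≠ 0) (hkn : k ≤ n)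
    (hψ : ContDiff ℝ 1 ψ) {γ : ℝ} (hγ : 0 ≤ γ) (hγ1 : γ < 1) {K : Set (Euc n)} (hK : IsCompact K)
    (hx₀ : x₀ ∉ K) :
    Tendsto (fun ε => sSup {d | ∃ x ∈ K, ∃ y ∈ K, x ≠ y ∧
        d = |(extBy n (ball x₀ ε) b (u ε) x - ψ x) - (extBy n (ball x₀ ε) b (u ε) y - ψ y)| /
          ‖x - y‖ ^ γ})
      (𝓝[>] (0 : ℝ)) (𝓝 0) := by
  obtain ⟨r, hr, hKr⟩ := exists_forall_le_norm_sub hK.isClosed hx₀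
  obtain ⟨L, hL, hlip⟩ := hrate.exists_eventually_lipschitz hC hu hk0 hkn hψ hK
    (div_pos hr three_pos) fun x hx => (mul_div_cancel₀ r three_ne_zero).trans_le (hKr x hx)
  refine tendsto_sSup_holder_of_lipschitz (w := fun ε x => extBy n (ball x₀ ε) b (u ε) x - ψ x)
    hγ hγ1 hL (div_pos hr three_pos) (tendsto_const_mul_arsinhRatio C r)
    (hrate.eventually_abs_extBy_sub_le hC.le hr hKr) ?_
  filter_upwards [hlip, eventually_extBy_ball_eq hr hKr] with ε hlipε hext x hx y hy hxy
  rw [hext x hx, hext y hy]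
  exact hlipε x hx y hy hxy

end Convergence

theorem statement14_general (n k : ℕ) (hn : 3 ≤ n) (hk1 : 1 ≤ k) (hkn : 2 * k ≤ n)
    (a : Fin n → ℝ) (hA : MemA n k (Matrix.diagonal a)) (x₀ : Euc n) (c : ℝ) (hc : 0 ≤ c)
    (u : ℝ → Euc n → ℝ) (hu : ∀ᶠ ε in 𝓝[>] (0 : ℝ), ExtBallSol n k a x₀ ε c (u ε)) :
    (∀ K : Set (Euc n), IsCompact K →
      Tendsto (fun ε : ℝ => ∫ x in K,
          |extBy n (Metric.ball x₀ ε) 0 (u ε) x - (quadA n (Matrix.diagonal a) x + c)|)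
        (𝓝[>] (0 : ℝ)) (𝓝 0)) ∧
    (∀ γ : ℝ, 0 < γ → γ < 1 →
      ∀ K : Set (Euc n), IsCompact K → K ⊆ {x₀}ᶜ →
        Tendsto (fun ε : ℝ => sSup ((fun x : Euc n =>
            |extBy n (Metric.ball x₀ ε) 0 (u ε) x -
              (quadA n (Matrix.diagonal a) x + c)|) '' K))
          (𝓝[>] (0 : ℝ)) (𝓝 0) ∧
        Tendsto (fun ε : ℝ => sSup {d : ℝ | ∃ x ∈ K, ∃ y ∈ K, x ≠ y ∧
            d = |(extBy n (Metric.ball x₀ ε) 0 (u ε) x -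
                    (quadA n (Matrix.diagonal a) x + c)) -
                  (extBy n (Metric.ball x₀ ε) 0 (u ε) y -
                    (quadA n (Matrix.diagonal a) y + c))| / ‖x - y‖ ^ γ})
          (𝓝[>] (0 : ℝ)) (𝓝 0)) := by
  have hk0 : k ≠ 0 := Nat.one_le_iff_ne_zero.1 hk1
  have hψ : ContDiff ℝ 1 fun x => quadA n (Matrix.diagonal a) x + c :=
    (contDiff_quadA _).add contDiff_const
  obtain ⟨C, hC, hrate⟩ :=
    exists_arsinhRateBound hn hk0 hkn (Matrix.posDef_diagonal_iff.1 hA.2.1) hA.2.2 hc hu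
  refine ⟨fun K hK => ?_, fun γ hγ hγ1 K hK hKx₀ => ?_⟩
  · have : NeZero n := ⟨by lia⟩
    exact hrate.tendsto_setIntegral_extBy hC.le (hu.mono fun ε h => h.continuousOn)
      hψ.continuous hK
  · have hx₀ : x₀ ∉ K := fun hx₀ => hKx₀ hx₀ rfl
    exact ⟨hrate.tendsto_sSup_extBy hC.le hK.isClosed hx₀,
      hrate.tendsto_sSup_holder_extBy hC hu hk0 (by lia) hψ hγ.le hγ1 hK hx₀⟩

/-- Proposition 3.2: as `ε → 0⁺`, the zero-extensions `ũ^ε` converge to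
`ψ(x) = ½xᵀAx + c` in `L¹_loc(ℝⁿ)` and in `C^{0,γ}_loc(ℝⁿ∖{x₀})` for every `0 < γ < 1`. -/
theorem statement14 (n k : ℕ) (hn : 3 ≤ n) (hk1 : 1 ≤ k) (hkn : 2 * k ≤ n)
    (a : Fin n → ℝ) (hA : MemA n k (Matrix.diagonal a))
    (hk1' : k = 1 → (⨆ i, a i) < 1 / 2)
    (x₀ : Euc n) (hx₀ : x₀ ∈ Metric.ball (0 : Euc n) (1 / 2)) (hx₀' : x₀ ≠ 0) :
    ∃ cstar : ℝ, 0 < cstar ∧ ∀ c : ℝ, cstar ≤ c →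
      ∀ u : ℝ → Euc n → ℝ,
        (∀ ε : ℝ, 0 < ε → ε < 1 / 2 → ExtBallSol n k a x₀ ε c (u ε)) →
        (∀ K : Set (Euc n), IsCompact K →
          Tendsto (fun ε : ℝ => ∫ x in K,
              |extBy n (Metric.ball x₀ ε) 0 (u ε) x -
                (quadA n (Matrix.diagonal a) x + c)|)
            (𝓝[>] (0 : ℝ)) (𝓝 0)) ∧
        (∀ γ : ℝ, 0 < γ → γ < 1 →
          ∀ K : Set (Euc n), IsCompact K → K ⊆ {x₀}ᶜ →
            Tendsto (fun ε : ℝ => sSup ((fun x : Euc n =>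
                |extBy n (Metric.ball x₀ ε) 0 (u ε) x -
                  (quadA n (Matrix.diagonal a) x + c)|) '' K))
              (𝓝[>] (0 : ℝ)) (𝓝 0) ∧
            Tendsto (fun ε : ℝ => sSup {d : ℝ | ∃ x ∈ K, ∃ y ∈ K, x ≠ y ∧
                d = |(extBy n (Metric.ball x₀ ε) 0 (u ε) x -
                        (quadA n (Matrix.diagonal a) x + c)) -
                      (extBy n (Metric.ball x₀ ε) 0 (u ε) y -
                        (quadA n (Matrix.diagonal a) y + c))| / ‖x - y‖ ^ γ})
              (𝓝[>] (0 : ℝ)) (𝓝 0)) := by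
  refine ⟨1, one_pos, fun c hc u hu => statement14_general n k hn hk1 hkn a hA x₀ c
    (zero_le_one.trans hc) u ?_⟩
  filter_upwards [Ioo_mem_nhdsGT one_half_pos] with ε hε using hu ε hε.1 hε.2
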